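/- arXiv:0910.1959 — 3 statements merged into one kernel-verified Lean document; each statement's English description precedes it below -/
import Mathlib

section
/- Let R be an affine root system (n = 1) of rank l in V. Let δ′ ∈ V⁰ ∖ {0} be such that ℤδ′ = (ℤR)⁰ := ℤR ∩ V⁰, and let Π′ ⊆ R with |Π′| = l be such that π(Π′) is a base of the irreducible finite root system π(R). Then there exists a unique α₀ ∈ R such that Π′ ∪ {α₀} is a base of R and α₀ = mδ′ + μ with m a positive integer and μ ∈ ℤΠ′. -/
/- ## Preliminaries: extended affine root systems (Saito) -/

noncomputable section

open Set

/-- The reflection `s_v : z ↦ z - (v^∨, z) v = z - (2 (v,z)/(v,v)) v` associated to a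
bilinear form `B` and a vector `v`.  (When `B v v = 0` this is the identity, by the
`division by zero = 0` convention; reflections are only ever used at non-isotropic `v`.) -/
def srefl {V : Type*} [AddCommGroup V] [Module ℝ V]
    (B : LinearMap.BilinForm ℝ V) (v : V) : Module.End ℝ V :=
  LinearMap.id - (((2 * (B v v)⁻¹) • (B v)).smulRight v)

/-- The Weyl group `W_S` generated by the reflections in the elements of `S`
(realized as the multiplicative closure; each generator is an involution, so this
agrees with the generated group). -/
def weyl {V : Type*} [AddCommGroup V] [Module ℝ V]
    (B : LinearMap.BilinForm ℝ V) (S : Set V) : Submonoid (Module.End ℝ V) :=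
  Submonoid.closure (srefl B '' S)

/-- The orbit `W_S · α`. -/
def worbit {V : Type*} [AddCommGroup V] [Module ℝ V]
    (B : LinearMap.BilinForm ℝ V) (S : Set V) (α : V) : Set V :=
  {v | ∃ w ∈ weyl B S, w α = v}

/-- `V⁰`, the set of isotropic vectors. -/
def nullSet {V : Type*} [AddCommGroup V] [Module ℝ V]
    (B : LinearMap.BilinForm ℝ V) : Set V := {v | B v v = 0}

/-- `ℤR`, the subgroup of `V` generated by `R`. -/
def zspan {V : Type*} [AddCommGroup V] (R : Set V) : AddSubgroup V :=
  AddSubgroup.closure R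

/-- `ℤ≥0 Π`, the set of nonnegative-integer linear combinations of elements of `Π`. -/
def nnspan {V : Type*} [AddCommMonoid V] (P : Set V) : Set V :=
  (AddSubmonoid.closure P : Set V)

/-- `(R, V)` is an `n`-extended affine root system of rank `l` (K. Saito). -/
structure IsEARS {V : Type*} [AddCommGroup V] [Module ℝ V]
    (B : LinearMap.BilinForm ℝ V) (R : Set V) (l n : ℕ) : Prop where
  rank_pos : 1 ≤ l
  findim : FiniteDimensional ℝ V
  symm : ∀ u v, B u v = B v u
  posSemidef : ∀ v, 0 ≤ B v v
  dim_eq : Module.finrank ℝ V = l + n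
  null_eq : nullSet B = (LinearMap.ker B : Set V)
  dim_null : Module.finrank ℝ (LinearMap.ker B) = n
  /-- (AX1), first half -/
  root_nonisotropic : ∀ α ∈ R, B α α ≠ 0
  /-- (AX1), second half -/
  span_eq_top : Submodule.span ℝ R = ⊤
  /-- (AX2) -/
  free : Module.Free ℤ (zspan R)
  /-- (AX2) -/
  rank_eq : Module.finrank ℤ (zspan R) = l + n
  /-- (AX3): `(α^∨, β) ∈ ℤ` -/
  integral : ∀ α ∈ R, ∀ β ∈ R, ∃ m : ℤ, 2 * B α β = (m : ℝ) * B α α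
  /-- (AX4) -/
  reflect : ∀ α ∈ R, srefl B α '' R = R
  /-- (AX5) -/
  connected : ∀ S' ⊆ R, S'.Nonempty → S' ≠ R → ∃ x ∈ S', ∃ y ∈ R \ S', B x y ≠ 0

/-- `R` is reduced, i.e. `R ∩ 2R = ∅`. -/
def IsReducedRS {V : Type*} [AddCommGroup V] [Module ℝ V] (R : Set V) : Prop :=
  ∀ α ∈ R, (2 : ℤ) • α ∉ R

/-- `Π₀` is a base (with `m` elements) of the root system `R₀`:
`Π₀ ⊆ R₀`, `Π₀` consists of `m` linearly independent elements, and
`R₀ = (R₀ ∩ ℤ≥0 Π₀) ∪ (R₀ ∩ ℤ≤0 Π₀)`. -/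
def IsBaseSet {M : Type*} [AddCommGroup M] [Module ℝ M] (R₀ P₀ : Set M) (m : ℕ) : Prop :=
  P₀ ⊆ R₀ ∧ P₀.Finite ∧ P₀.ncard = m ∧
  LinearIndependent ℝ ((↑) : P₀ → M) ∧
  R₀ = (R₀ ∩ nnspan P₀) ∪ (R₀ ∩ (-(nnspan P₀)))

/-- The bilinear form induced on a quotient `V ⧸ W` by a form vanishing on `W`. -/
def quotForm {V : Type*} [AddCommGroup V] [Module ℝ V]
    (W : Submodule ℝ V) (B : LinearMap.BilinForm ℝ V)
    (h1 : ∀ w ∈ W, B w = 0) (h2 : ∀ v : V, ∀ w ∈ W, B v w = 0) :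
    LinearMap.BilinForm ℝ (V ⧸ W) :=
  Submodule.liftQ W
    { toFun := fun v => Submodule.liftQ W (B v) (fun w hw => LinearMap.mem_ker.mpr (h2 v w hw))
      map_add' := fun u v => by
        ext x
        simp
      map_smul' := fun c v => by
        ext x
        simp }
    (fun w hw => by
      simp only [LinearMap.mem_ker]
      ext x
      simp [h1 w hw])

end

structure ARCore {V ι : Type*} [AddCommGroup V] [Module ℝ V] [Fintype ι]
    (B : LinearMap.BilinForm ℝ V) (R : Set V) (δ : V) (e : ι → V)
    (L : V →ₗ[ℝ] ℝ) (C : ι → V →ₗ[ℝ] ℝ) : Prop where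
  symm : ∀ u v, B u v = B v u
  psd : ∀ v, 0 ≤ B v v
  Bδ : ∀ v, B δ v = 0
  iso : ∀ v, B v v = 0 → ∀ i, C i v = 0
  noniso : ∀ α ∈ R, B α α ≠ 0
  span : Submodule.span ℝ R = ⊤
  integral : ∀ α ∈ R, ∀ β ∈ R, ∃ m : ℤ, 2 * B α β = (m : ℝ) * B α α
  refl : ∀ α ∈ R, ∀ β ∈ R, ∀ m : ℤ, 2 * B α β = (m : ℝ) * B α α → β - (m : ℝ) • α ∈ R
  conn : ∀ S' ⊆ R, S'.Nonempty → S' ≠ R → ∃ x ∈ S', ∃ y ∈ R \ S', B x y ≠ 0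
  eR : ∀ i, e i ∈ R
  Lδ : L δ = 1
  Cδ : ∀ i, C i δ = 0
  Le : ∀ i, L (e i) = 0
  Ce : ∀ i, C i (e i) = 1
  Ce' : ∀ i j, i ≠ j → C i (e j) = 0
  dec : ∀ v, v = L v • δ + ∑ i, C i v • e i
  Lint : ∀ γ ∈ R, ∃ k : ℤ, L γ = k
  sgn : ∀ γ ∈ R, (∀ i, ∃ n : ℕ, C i γ = n) ∨ (∀ i, ∃ n : ℕ, C i γ = -n)

namespace ARCore

variable {V ι : Type*} [AddCommGroup V] [Module ℝ V] [Fintype ι]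
    {B : LinearMap.BilinForm ℝ V} {R : Set V} {δ : V} {e : ι → V}
    {L : V →ₗ[ℝ] ℝ} {C : ι → V →ₗ[ℝ] ℝ}

theorem pos (h : ARCore B R δ e L C) {α : V} (hα : α ∈ R) : 0 < B α α :=
  lt_of_le_of_ne (h.psd α) (Ne.symm (h.noniso α hα))

theorem Bexp (h : ARCore B R δ e L C) (v w : V) : B v w = ∑ i, C i v * B (e i) w := by
  conv_lhs => rw [h.dec v]
  simp [h.Bδ, LinearMap.sum_apply]

theorem Bexp' (h : ARCore B R δ e L C) (v w : V) : B w v = ∑ i, C i v * B w (e i) := by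
  rw [h.symm, h.Bexp]
  exact Finset.sum_congr rfl fun i _ => by rw [h.symm]

theorem neg (h : ARCore B R δ e L C) {α : V} (hα : α ∈ R) : -α ∈ R := by
  have := h.refl α hα α hα 2 (by norm_num)
  convert this using 1
  push_cast
  module

theorem cs (h : ARCore B R δ e L C) (v w : V) : B v w * B v w ≤ B v v * B w w := by
  have := LinearMap.BilinForm.apply_mul_apply_le_of_forall_zero_le B h.psd v w
  rwa [h.symm w v] at this

theorem ints (h : ARCore B R δ e L C) {α β : V} (hα : α ∈ R) (hβ : β ∈ R) :
    ∃ m n : ℤ, 2 * B α β = m * B α α ∧ 2 * B α β = n * B β β ∧ m * n ≤ 4 ∧ 0 ≤ m * n := by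
  obtain ⟨m, hm⟩ := h.integral α hα β hβ
  obtain ⟨n, hn⟩ := h.integral β hβ α hα
  rw [h.symm β α] at hn
  refine ⟨m, n, hm, hn, ?_, ?_⟩
  · have h1 : ((m * n : ℤ) : ℝ) * (B α α * B β β) ≤ 4 * (B α α * B β β) := by
      have h2 : (m : ℝ) * n * (B α α * B β β) = (2 * B α β) * (2 * B α β) := by
        rw [hm]
        have := hm.symm.trans hn
        linear_combination (m : ℝ) * B α α * (-this)
      push_cast
      nlinarith [h.cs α β]
    exact_mod_cast le_of_mul_le_mul_right h1 (mul_pos (h.pos hα) (h.pos hβ))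
  · have h1 : 0 * (B α α * B β β) ≤ ((m * n : ℤ) : ℝ) * (B α α * B β β) := by
      have h2 : (m : ℝ) * n * (B α α * B β β) = (2 * B α β) * (2 * B α β) := by
        rw [hm]
        have := hm.symm.trans hn
        linear_combination (m : ℝ) * B α α * (-this)
      push_cast
      nlinarith [mul_self_nonneg (B α β)]
    exact_mod_cast le_of_mul_le_mul_right h1 (mul_pos (h.pos hα) (h.pos hβ))

theorem root_sub (h : ARCore B R δ e L C) {α β : V} (hα : α ∈ R) (hβ : β ∈ R)
    (hp : 0 < B α β) : α - β ∈ R ∨ B (α - β) (α - β) = 0 := by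
  obtain ⟨m, n, hm, hn, hmn, _⟩ := h.ints hα hβ
  have pα := h.pos hα
  have pβ := h.pos hβ
  have hm0 : 0 < m := by
    have : (0 : ℝ) < m := by
      by_contra hc
      nlinarith
    exact_mod_cast this
  have hn0 : 0 < n := by
    have : (0 : ℝ) < n := by
      by_contra hc
      nlinarith
    exact_mod_cast this
  by_cases m1 : m = 1
  · left
    have := h.neg (h.refl α hα β hβ m hm)
    convert this using 1
    rw [m1]; push_cast; module
  by_cases n1 : n = 1
  · left
    have := h.refl β hβ α hα n (by rw [h.symm]; exact hn)
    convert this using 1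
    rw [n1]; push_cast; module
  have hm2 : m = 2 := by nlinarith [show 2 ≤ m by omega, show 2 ≤ n by omega]
  have hn2 : n = 2 := by nlinarith [show 2 ≤ m by omega, show 2 ≤ n by omega]
  right
  subst hm2 hn2
  push_cast at hm hn
  simp only [map_sub, LinearMap.sub_apply]
  rw [h.symm β α]
  linarith

theorem bdd (h : ARCore B R δ e L C) : ∃ N : ℕ, ∀ γ ∈ R, |∑ i, C i γ| < N := by
  classical
  let Φ : V → ι → ℝ := fun γ i => 2 * B (e i) γ / B (e i) (e i)
  let H : V → ℝ := fun γ => ∑ i, C i γ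
  have hT : (Φ '' R).Finite := by
    refine Set.Finite.subset (Set.Finite.pi' (t := fun _ : ι => (fun z : ℤ => (z : ℝ)) '' Set.Icc (-4) 4)
      (fun i => (Set.finite_Icc _ _).image _)) ?_
    rintro _ ⟨γ, hγ, rfl⟩ i
    obtain ⟨m, n, hm, hn, hmn, hmn0⟩ := h.ints (h.eR i) hγ
    refine ⟨m, ?_, ?_⟩
    · have pα := h.pos (h.eR i)
      have pβ := h.pos hγ
      by_cases n0 : n = 0
      · subst n0
        have : (m : ℝ) = 0 := by
          have : (m : ℝ) * B (e i) (e i) = 0 := by rw [← hm, hn]; simp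
          rcases mul_eq_zero.1 this with h | h
          · exact h
          · exact absurd h pα.ne'
        have : m = 0 := by exact_mod_cast this
        subst this; simp
      · rcases lt_or_gt_of_ne n0 with h1 | h1
        · constructor <;> nlinarith
        · constructor <;> nlinarith
    · simp only [Φ]
      rw [hm, mul_div_cancel_right₀ _ (h.pos (h.eR i)).ne']
  have key : ∀ γ γ', Φ γ = Φ γ' → H γ = H γ' := by
    intro γ γ' hh
    have h1 : ∀ i, B (e i) (γ - γ') = 0 := by
      intro i
      have := congrFun hh i
      simp only [Φ] at this
      rw [div_left_inj' (h.pos (h.eR i)).ne'] at this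
      rw [map_sub]; linarith
    have h2 : B (γ - γ') (γ - γ') = 0 := by
      rw [h.Bexp]; exact Finset.sum_eq_zero fun i _ => by rw [h1, mul_zero]
    refine Finset.sum_congr rfl fun i _ => ?_
    have := h.iso _ h2 i
    rw [map_sub] at this; linarith
  have hH : (H '' R).Finite := by
    refine (hT.image (fun t => H (Function.invFunOn Φ R t))).subset ?_
    rintro _ ⟨γ, hγ, rfl⟩
    refine ⟨Φ γ, ⟨γ, hγ, rfl⟩, key _ _ ?_⟩
    exact Function.invFunOn_eq ⟨γ, hγ, rfl⟩
  obtain ⟨M, hM⟩ := (hH.image (fun x => |x|)).bddAbove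
  obtain ⟨N, hN⟩ := exists_nat_gt M
  exact ⟨N, fun γ hγ => lt_of_le_of_lt (hM ⟨_, ⟨γ, hγ, rfl⟩, rfl⟩) hN⟩

/-- no mixed roots -/
theorem nomixed (h : ARCore B R δ e L C) (J : Set ι)
    (hJ : ∀ i ∈ J, ∀ j ∉ J, B (e i) (e j) = 0) (n : ℕ) :
    ∀ γ ∈ R, (∀ i, 0 ≤ C i γ) → (∃ j ∈ J, 0 < C j γ) → (∃ k ∉ J, 0 < C k γ) →
      ∑ i, C i γ ≤ n → False := by
  classical
  induction n with
  | zero =>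
    rintro γ hγ h0 ⟨j, hj, hjp⟩ _ hs
    have := Finset.single_le_sum (f := fun i => C i γ) (fun i _ => h0 i) (Finset.mem_univ j)
    simp at hs this
    linarith
  | succ n ih =>
    rintro γ hγ h0 ⟨j, hj, hjp⟩ ⟨k, hk, hkp⟩ hs
    let g : V := ∑ i, (if i ∈ J then C i γ else 0) • e i
    have hCg : ∀ i, C i g = if i ∈ J then C i γ else 0 := by
      intro i
      simp only [g, map_sum, map_smul, smul_eq_mul]
      rw [Finset.sum_eq_single i]
      · rw [h.Ce]; simp
      · intro b _ hb; rw [h.Ce' _ _ hb.symm]; simp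
      · simp
    have hgg : 0 < B g g := by
      refine lt_of_le_of_ne (h.psd g) fun h1 => ?_
      have := h.iso g h1.symm j
      rw [hCg, if_pos hj] at this
      linarith
    have hg1 : B γ g = B g g := by
      rw [h.Bexp γ g, h.Bexp g g]
      refine Finset.sum_congr rfl fun i _ => ?_
      rw [hCg]
      split_ifs with hi
      · rfl
      · rw [h.Bexp' g, Finset.sum_eq_zero]
        · simp
        · intro a _
          rw [hCg]
          split_ifs with ha
          · rw [h.symm, hJ a ha i hi]; simp
          · simp
    have : ∃ i ∈ J, 0 < B γ (e i) := by
      by_contra hc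
      push Not at hc
      have : B γ g ≤ 0 := by
        rw [h.Bexp' g]
        refine Finset.sum_nonpos fun i _ => ?_
        rw [hCg]
        split_ifs with hi
        · exact mul_nonpos_of_nonneg_of_nonpos (h0 i) (hc i hi)
        · simp
      linarith
    obtain ⟨i, hi, hip⟩ := this
    obtain ⟨m, hm⟩ := h.integral (e i) (h.eR i) γ hγ
    have hr := h.refl (e i) (h.eR i) γ hγ m hm
    have pe := h.pos (h.eR i)
    rw [h.symm] at hm
    have hm0 : (1 : ℝ) ≤ m := by
      have : (0 : ℝ) < m := by
        by_contra hc
        nlinarith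
      have : 0 < m := by exact_mod_cast this
      exact_mod_cast this
    set γ' := γ - (m : ℝ) • e i with hγ'
    have hC' : ∀ a, a ≠ i → C a γ' = C a γ := by
      intro a ha
      simp [hγ', h.Ce' a i ha]
    have hCi : C i γ' = C i γ - m := by simp [hγ', h.Ce]
    have hki : k ≠ i := fun hh => hk (hh ▸ hi)
    have hpos : ∀ a, 0 ≤ C a γ' := by
      rcases h.sgn γ' hr with hh | hh
      · intro a; obtain ⟨n, hn⟩ := hh a; rw [hn]; positivity
      · obtain ⟨n, hn⟩ := hh k
        rw [hC' k hki] at hn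
        have : (0 : ℝ) ≤ n := by positivity
        linarith
    refine ih γ' hr hpos ?_ ⟨k, hk, by rw [hC' k hki]; exact hkp⟩ ?_
    · by_contra hc
      push Not at hc
      have h1 : B γ' (e i) = 0 := by
        rw [h.Bexp]
        refine Finset.sum_eq_zero fun a _ => ?_
        by_cases ha : a ∈ J
        · rw [le_antisymm (hc a ha) (hpos a), zero_mul]
        · rw [h.symm, hJ i hi a ha, mul_zero]
      simp only [hγ', map_sub, LinearMap.sub_apply, map_smul, LinearMap.smul_apply, smul_eq_mul] at h1
      linarith
    · have : ∑ a, C a γ' = ∑ a, C a γ - m := by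
        have : ∀ a, C a γ' = C a γ - (if a = i then (m : ℝ) else 0) := by
          intro a
          split_ifs with ha
          · subst ha; exact hCi
          · rw [hC' a ha]; simp
        simp [this]
      rw [this]
      push_cast at hs
      linarith

theorem conn_e (h : ARCore B R δ e L C) (J : Set ι) (hne : J.Nonempty)
    (hJ : ∀ i ∈ J, ∀ j ∉ J, B (e i) (e j) = 0) : ∀ k, k ∈ J := by
  intro k
  by_contra hk
  obtain ⟨j0, hj0⟩ := hne
  obtain ⟨x, ⟨hxR, hx⟩, y, ⟨hyR, hy⟩, hxy⟩ := h.conn {γ ∈ R | ∀ i ∉ J, C i γ = 0} (fun _ hx => hx.1)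
    ⟨e j0, h.eR j0, fun i hi => h.Ce' _ _ (fun hh => hi (hh ▸ hj0))⟩
    (fun hh => by
      have : e k ∈ {γ ∈ R | ∀ i ∉ J, C i γ = 0} := by rw [hh]; exact h.eR k
      have := this.2 k hk
      rw [h.Ce] at this
      exact one_ne_zero this)
  have hy' : ∃ i ∉ J, C i y ≠ 0 := by
    by_contra hc
    push Not at hc
    exact hy ⟨hyR, hc⟩
  obtain ⟨i, hi, hiy⟩ := hy'
  apply hxy
  have hyJ : ∀ j ∈ J, C j y = 0 := by
    intro j hj
    by_contra hjy
    rcases h.sgn y hyR with hh | hh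
    · have h0 : ∀ a, 0 ≤ C a y := fun a => by obtain ⟨n, hn⟩ := hh a; rw [hn]; positivity
      obtain ⟨n, hn⟩ := exists_nat_ge (∑ i, C i y)
      exact h.nomixed J hJ n y hyR h0 ⟨j, hj, lt_of_le_of_ne (h0 j) (Ne.symm hjy)⟩
        ⟨i, hi, lt_of_le_of_ne (h0 i) (Ne.symm hiy)⟩ hn
    · have h0 : ∀ a, 0 ≤ C a (-y) := fun a => by
        obtain ⟨n, hn⟩ := hh a; rw [map_neg, hn, neg_neg]; positivity
      obtain ⟨n, hn⟩ := exists_nat_ge (∑ i, C i (-y))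
      refine h.nomixed J hJ n (-y) (h.neg hyR) h0 ⟨j, hj, lt_of_le_of_ne (h0 j) ?_⟩
        ⟨i, hi, lt_of_le_of_ne (h0 i) ?_⟩ hn
      · rw [map_neg]; exact fun hh => hjy (by linarith)
      · rw [map_neg]; exact fun hh => hiy (by linarith)
  rw [h.Bexp]
  refine Finset.sum_eq_zero fun a _ => ?_
  by_cases ha : a ∈ J
  · rw [h.Bexp' y, Finset.sum_eq_zero, mul_zero]
    intro b _
    by_cases hb : b ∈ J
    · rw [hyJ b hb, zero_mul]
    · rw [hJ a ha b hb, mul_zero]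
  · rw [hx a ha, zero_mul]

def PosR (R : Set V) (L : V →ₗ[ℝ] ℝ) (C : ι → V →ₗ[ℝ] ℝ) : Set V :=
  {γ | γ ∈ R ∧ (0 < L γ ∨ (L γ = 0 ∧ ∀ i, 0 ≤ C i γ))}

def Mon (R : Set V) (L : V →ₗ[ℝ] ℝ) (C : ι → V →ₗ[ℝ] ℝ) : AddSubmonoid V :=
  AddSubmonoid.closure (PosR R L C)

def Irr (R : Set V) (L : V →ₗ[ℝ] ℝ) (C : ι → V →ₗ[ℝ] ℝ) : Set V :=
  {γ | γ ∈ Mon R L C ∧ γ ≠ 0 ∧ ∀ a ∈ Mon R L C, ∀ b ∈ Mon R L C, γ = a + b → a = 0 ∨ b = 0}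

theorem Cint (h : ARCore B R δ e L C) {γ : V} (hγ : γ ∈ R) (i : ι) : ∃ z : ℤ, C i γ = z := by
  rcases h.sgn γ hγ with hh | hh
  · obtain ⟨n, hn⟩ := hh i
    exact ⟨n, by rw [hn]; simp⟩
  · obtain ⟨n, hn⟩ := hh i
    exact ⟨-n, by rw [hn]; simp⟩

theorem ne0 (h : ARCore B R δ e L C) {γ : V} (hγ : γ ∈ R) : γ ≠ 0 := by
  rintro rfl
  exact h.noniso _ hγ (by simp)

theorem tri (h : ARCore B R δ e L C) {γ : V} (hγ : γ ∈ R) : γ ∈ PosR R L C ∨ -γ ∈ PosR R L C := by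
  rcases lt_trichotomy (L γ) 0 with h1 | h1 | h1
  · exact Or.inr ⟨h.neg hγ, Or.inl (by rw [map_neg]; linarith)⟩
  · rcases h.sgn γ hγ with hh | hh
    · exact Or.inl ⟨hγ, Or.inr ⟨h1, fun a => by obtain ⟨n, hn⟩ := hh a; rw [hn]; positivity⟩⟩
    · exact Or.inr ⟨h.neg hγ, Or.inr ⟨by simp [h1], fun a => by
        obtain ⟨n, hn⟩ := hh a; rw [map_neg, hn, neg_neg]; positivity⟩⟩
  · exact Or.inl ⟨hγ, Or.inl h1⟩

theorem mon_prop (h : ARCore B R δ e L C) {m : V} (hm : m ∈ Mon R L C) :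
    0 ≤ L m ∧ (∃ k : ℤ, L m = k) ∧ (∀ i, ∃ z : ℤ, C i m = z) ∧ (L m = 0 → ∀ i, 0 ≤ C i m) := by
  induction hm using AddSubmonoid.closure_induction with
  | mem x hx =>
    refine ⟨?_, h.Lint x hx.1, h.Cint hx.1, ?_⟩
    · rcases hx.2 with h1 | h1
      · exact h1.le
      · exact h1.1.ge
    · intro h0
      rcases hx.2 with h1 | h1
      · exact absurd h0 h1.ne'
      · exact h1.2
  | zero => exact ⟨by simp, ⟨0, by simp⟩, fun i => ⟨0, by simp⟩, fun _ i => by simp⟩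
  | add x y _ _ hx hy =>
    obtain ⟨x1, ⟨k, hk⟩, x3, x4⟩ := hx
    obtain ⟨y1, ⟨k', hk'⟩, y3, y4⟩ := hy
    refine ⟨by rw [map_add]; linarith, ⟨k + k', by rw [map_add, hk, hk']; push_cast; rfl⟩, ?_, ?_⟩
    · intro i
      obtain ⟨a, ha⟩ := x3 i
      obtain ⟨b, hb⟩ := y3 i
      exact ⟨a + b, by rw [map_add, ha, hb]; push_cast; rfl⟩
    · intro h0 i
      rw [map_add] at h0
      have := x4 (by linarith) i
      have := y4 (by linarith) i
      rw [map_add]; linarith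

theorem zero_of (h : ARCore B R δ e L C) {v : V} (h0 : L v = 0) (h1 : ∀ i, C i v = 0) : v = 0 := by
  rw [h.dec v, h0]
  simp [h1]

/-- height function -/
theorem ht (h : ARCore B R δ e L C) : ∃ f : V →ₗ[ℝ] ℝ, ∀ m ∈ Mon R L C, m = 0 ∨ 1 ≤ f m := by
  obtain ⟨N, hN⟩ := h.bdd
  refine ⟨(N : ℝ) • L + ∑ i, C i, ?_⟩
  intro m hm
  induction hm using AddSubmonoid.closure_induction with
  | mem x hx =>
    right
    simp only [LinearMap.add_apply, LinearMap.smul_apply, smul_eq_mul, LinearMap.sum_apply]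
    obtain ⟨k, hk⟩ := h.Lint x hx.1
    choose z hz using fun i => h.Cint hx.1 i
    have hb := hN x hx.1
    have hp := hx.2
    have hx0 := h.ne0 hx.1
    simp only [hk, hz] at hb hp ⊢
    have : 0 < (N : ℤ) * k + ∑ i, z i := by
      have hb' : |∑ i, z i| < (N : ℤ) := by exact_mod_cast hb
      have := abs_lt.1 hb'
      rcases hp with h1 | ⟨h1, h2⟩
      · have : 0 < k := by exact_mod_cast h1
        nlinarith
      · have k0 : k = 0 := by exact_mod_cast h1
        have z0 : ∀ i, 0 ≤ z i := fun i => by exact_mod_cast h2 i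
        rw [k0, mul_zero, zero_add]
        refine lt_of_le_of_ne (Finset.sum_nonneg fun i _ => z0 i) fun hh => hx0 ?_
        have := (Finset.sum_eq_zero_iff_of_nonneg fun i _ => z0 i).1 hh.symm
        refine h.zero_of (by rw [hk, k0]; simp) fun i => by rw [hz, this i (Finset.mem_univ i)]; simp
    exact_mod_cast this
  | zero => left; rfl
  | add x y _ _ hx hy =>
    rcases hx with rfl | hx
    · simpa using hy
    · rcases hy with rfl | hy
      · right; simpa using hx
      · right; rw [map_add]; linarith

theorem irr_pos {γ : V} (hγ : γ ∈ Irr R L C) : γ ∈ PosR R L C := by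
  have key : ∀ m ∈ Mon R L C, m ∈ Irr R L C → m ∈ PosR R L C := by
    intro m hm
    induction hm using AddSubmonoid.closure_induction with
    | mem x hx => exact fun _ => hx
    | zero => exact fun hh => absurd rfl hh.2.1
    | add x y hx hy ihx ihy =>
      intro hh
      rcases hh.2.2 x hx y hy rfl with h1 | h1
      · subst h1; rw [zero_add] at hh ⊢; exact ihy hh
      · subst h1; rw [add_zero] at hh ⊢; exact ihx hh
  exact key γ hγ.1 hγ

theorem gen (h : ARCore B R δ e L C) {m : V} (hm : m ∈ Mon R L C) :
    m ∈ AddSubmonoid.closure (Irr R L C) := by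
  obtain ⟨f, hf⟩ := h.ht
  have key : ∀ n : ℕ, ∀ m ∈ Mon R L C, f m ≤ n → m ∈ AddSubmonoid.closure (Irr R L C) := by
    intro n
    induction n with
    | zero =>
      intro m hm hle
      rcases hf m hm with rfl | h1
      · exact zero_mem _
      · simp at hle; linarith
    | succ n ih =>
      intro m hm hle
      by_cases m0 : m = 0
      · subst m0; exact zero_mem _
      by_cases hI : m ∈ Irr R L C
      · exact AddSubmonoid.subset_closure hI
      · have : ∃ a ∈ Mon R L C, ∃ b ∈ Mon R L C, m = a + b ∧ a ≠ 0 ∧ b ≠ 0 := by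
          by_contra hc
          push Not at hc
          refine hI ⟨hm, m0, fun a ha b hb hab => ?_⟩
          by_cases a0 : a = 0
          · exact Or.inl a0
          · exact Or.inr (hc a ha b hb hab a0)
        obtain ⟨a, ha, b, hb, rfl, a0, b0⟩ := this
        have fa := (hf a ha).resolve_left a0
        have fb := (hf b hb).resolve_left b0
        rw [map_add] at hle
        push_cast at hle
        exact add_mem (ih a ha (by linarith)) (ih b hb (by linarith))
  obtain ⟨n, hn⟩ := exists_nat_ge (f m)
  exact key n m hm hn

theorem kap (h : ARCore B R δ e L C) (κ : V) (hκ : ∀ v, B κ v = 0) (hL : 1 ≤ L κ) (n : ℕ) :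
    ∀ γ ∈ PosR R L C, γ - κ ∈ R → L γ ≤ n → κ ∈ Mon R L C := by
  induction n with
  | zero =>
    intro γ hγ hr hle
    have : -(γ - κ) ∈ PosR R L C := by
      refine (h.tri hr).resolve_left fun hh => ?_
      have := (h.mon_prop (AddSubmonoid.subset_closure hh)).1
      rw [map_sub] at this
      simp at hle
      linarith
    have h2 := add_mem (AddSubmonoid.subset_closure hγ) (AddSubmonoid.subset_closure this)
    rw [show γ + -(γ - κ) = κ by abel] at h2
    exact h2
  | succ n ih =>
    intro γ hγ hr hle
    rcases h.tri hr with hh | hh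
    · refine ih (γ - κ) hh ?_ (by rw [map_sub]; push_cast at hle; linarith)
      have := h.neg (h.refl (γ - κ) hr γ hγ.1 2 (by
        simp [hκ, h.symm _ κ]))
      convert this using 1
      push_cast
      module
    · have h2 := add_mem (AddSubmonoid.subset_closure hγ) (AddSubmonoid.subset_closure hh)
      rw [show γ + -(γ - κ) = κ by abel] at h2
      exact h2

theorem irr_nonpos (h : ARCore B R δ e L C) {α β : V} (hα : α ∈ Irr R L C) (hβ : β ∈ Irr R L C)
    (hne : α ≠ β) : B α β ≤ 0 := by
  by_contra hc
  push Not at hc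
  have pα := irr_pos hα
  have pβ := irr_pos hβ
  rcases h.root_sub pα.1 pβ.1 hc with h1 | h1
  · rcases h.tri h1 with h2 | h2
    · rcases hα.2.2 β hβ.1 (α - β) (AddSubmonoid.subset_closure h2) (by abel) with h3 | h3
      · exact hβ.2.1 h3
      · exact hne (sub_eq_zero.1 h3)
    · rcases hβ.2.2 α hα.1 (-(α - β)) (AddSubmonoid.subset_closure h2) (by abel) with h3 | h3
      · exact hα.2.1 h3
      · exact hne (sub_eq_zero.1 (neg_eq_zero.1 h3))
  · have key : ∀ α ∈ Irr R L C, ∀ β ∈ Irr R L C, B (α - β) (α - β) = 0 → 0 < L (α - β) → False := by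
      intro α hα β hβ h0 hL
      have pα := irr_pos hα
      have pβ := irr_pos hβ
      have hL1 : 1 ≤ L (α - β) := by
        obtain ⟨a, ha⟩ := h.Lint α pα.1
        obtain ⟨b, hb⟩ := h.Lint β pβ.1
        rw [map_sub, ha, hb] at hL ⊢
        have : 0 < a - b := by exact_mod_cast hL
        exact_mod_cast this
      have hκ : ∀ v, B (α - β) v = 0 := by
        intro v
        rw [h.Bexp]
        exact Finset.sum_eq_zero fun i _ => by rw [h.iso _ h0 i, zero_mul]
      obtain ⟨n, hn⟩ := exists_nat_ge (L α)
      have hM := h.kap (α - β) hκ hL1 n α pα (by simpa using pβ.1) hn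
      rcases hα.2.2 β hβ.1 (α - β) hM (by abel) with h3 | h3
      · exact hβ.2.1 h3
      · rw [h3] at hL; simp at hL
    rcases lt_trichotomy (L (α - β)) 0 with h2 | h2 | h2
    · refine key β hβ α hα ?_ ?_
      · rw [← neg_sub α β, map_neg, map_neg, LinearMap.neg_apply, neg_neg]; exact h1
      · rw [← neg_sub α β, map_neg]; linarith
    · exact hne (sub_eq_zero.1 (h.zero_of h2 (h.iso _ h1)))
    · exact key α hα β hβ h1 h2

theorem e_pos (h : ARCore B R δ e L C) (i : ι) : e i ∈ PosR R L C := by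
  refine ⟨h.eR i, Or.inr ⟨h.Le i, fun j => ?_⟩⟩
  by_cases hj : j = i
  · subst hj; rw [h.Ce]; norm_num
  · rw [h.Ce' _ _ hj]

theorem e_irr (h : ARCore B R δ e L C) (i : ι) : e i ∈ Irr R L C := by
  refine ⟨AddSubmonoid.subset_closure (h.e_pos i), h.ne0 (h.eR i), ?_⟩
  intro a ha b hb hab
  obtain ⟨a1, _, a3, a4⟩ := h.mon_prop ha
  obtain ⟨b1, _, b3, b4⟩ := h.mon_prop hb
  have hL : L a + L b = 0 := by rw [← map_add, ← hab, h.Le]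
  have La : L a = 0 := by linarith
  have Lb : L b = 0 := by linarith
  have a5 := a4 La
  have b5 := b4 Lb
  have hj : ∀ j, j ≠ i → C j a = 0 ∧ C j b = 0 := by
    intro j hj
    have : C j a + C j b = 0 := by rw [← map_add, ← hab, h.Ce' _ _ hj]
    have := a5 j
    have := b5 j
    constructor <;> linarith
  have hi : C i a + C i b = 1 := by rw [← map_add, ← hab, h.Ce]
  obtain ⟨x, hx⟩ := a3 i
  obtain ⟨y, hy⟩ := b3 i
  have hx0 := a5 i
  have hy0 := b5 i
  rw [hx] at hx0
  rw [hy] at hy0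
  rw [hx, hy] at hi
  have hx0 : 0 ≤ x := by exact_mod_cast hx0
  have hy0 : 0 ≤ y := by exact_mod_cast hy0
  have hi : x + y = 1 := by exact_mod_cast hi
  rcases (show x = 0 ∨ y = 0 by omega) with rfl | rfl
  · left
    refine h.zero_of La fun j => ?_
    by_cases hji : j = i
    · subst hji; rw [hx]; simp
    · exact (hj j hji).1
  · right
    refine h.zero_of Lb fun j => ?_
    by_cases hji : j = i
    · subst hji; rw [hy]; simp
    · exact (hj j hji).2

theorem irr_level (h : ARCore B R δ e L C) {α : V} (hα : α ∈ Irr R L C) :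
    0 < L α ∨ α ∈ Set.range e := by
  classical
  obtain ⟨a1, _, a3, a4⟩ := h.mon_prop hα.1
  by_cases hL : L α = 0
  swap
  · exact Or.inl (lt_of_le_of_ne a1 (Ne.symm hL))
  right
  have a5 := a4 hL
  choose z hz using a3
  have z0 : ∀ i, 0 ≤ z i := fun i => by have := a5 i; rw [hz] at this; exact_mod_cast this
  have : ∃ i, z i ≠ 0 := by
    by_contra hc
    push Not at hc
    exact hα.2.1 (h.zero_of hL fun i => by rw [hz, hc]; simp)
  obtain ⟨i, hi⟩ := this
  have hd : α - e i = ∑ j, (z j - if j = i then 1 else 0).toNat • e j := by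
    have : ∀ j, ((z j - if j = i then 1 else 0).toNat) • e j = C j α • e j - (if j = i then e j else 0) := by
      intro j
      rw [hz, ← natCast_zsmul, Int.toNat_of_nonneg]
      · split_ifs
        · rw [sub_smul, one_smul, Int.cast_smul_eq_zsmul]
        · simp [Int.cast_smul_eq_zsmul]
      · split_ifs with hj
        · subst hj; have := z0 j; omega
        · simpa using z0 j
    rw [Finset.sum_congr rfl fun j _ => this j, Finset.sum_sub_distrib]
    conv_lhs => rw [h.dec α, hL]
    simp
  have hm : α - e i ∈ Mon R L C := by
    rw [hd]
    exact sum_mem fun j _ => nsmul_mem (AddSubmonoid.subset_closure (h.e_pos j)) _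
  rcases hα.2.2 (e i) (h.e_irr i).1 (α - e i) hm (by abel) with h1 | h1
  · exact absurd h1 (h.ne0 (h.eR i))
  · exact ⟨i, (sub_eq_zero.1 h1).symm⟩

theorem irr_unique (h : ARCore B R δ e L C) {α β : V} (hα : α ∈ Irr R L C) (hβ : β ∈ Irr R L C)
    (ha : 0 < L α) (hb : 0 < L β) : α = β := by
  by_contra hne
  have Rα := (irr_pos hα).1
  have Rβ := (irr_pos hβ).1
  have hae : ∀ i, B (e i) α ≤ 0 := fun i => h.irr_nonpos (h.e_irr i) hα (fun hh => by
    rw [← hh, h.Le] at ha; exact lt_irrefl _ ha)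
  have hbe : ∀ i, B (e i) β ≤ 0 := fun i => h.irr_nonpos (h.e_irr i) hβ (fun hh => by
    rw [← hh, h.Le] at hb; exact lt_irrefl _ hb)
  have hc : ∀ i, C i α ≤ 0 := by
    rcases h.sgn α Rα with hh | hh
    · exfalso
      have := h.pos Rα
      rw [h.Bexp] at this
      refine absurd this (not_lt.2 (Finset.sum_nonpos fun i _ => ?_))
      obtain ⟨n, hn⟩ := hh i
      rw [hn]
      exact mul_nonpos_of_nonneg_of_nonpos (by positivity) (hae i)
    · intro i; obtain ⟨n, hn⟩ := hh i; rw [hn]; simp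
  have hab := h.irr_nonpos hα hβ hne
  rw [h.Bexp] at hab
  have hnn : ∀ i ∈ Finset.univ, 0 ≤ C i α * B (e i) β := fun i _ =>
    mul_nonneg_of_nonpos_of_nonpos (hc i) (hbe i)
  have hz := (Finset.sum_eq_zero_iff_of_nonneg hnn).1 (le_antisymm hab (Finset.sum_nonneg hnn))
  have hall := h.conn_e {i | C i α ≠ 0} (by
      by_contra hcc
      rw [Set.not_nonempty_iff_eq_empty, Set.eq_empty_iff_forall_notMem] at hcc
      simp only [Set.mem_ofPred_eq, not_not] at hcc
      apply h.noniso α Rα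
      rw [h.Bexp]
      exact Finset.sum_eq_zero fun i _ => by rw [hcc, zero_mul]) (by
      intro i hi j hj
      simp only [Set.mem_ofPred_eq, not_not] at hi hj
      have h1 := hae j
      rw [h.Bexp' α] at h1
      have hnn : ∀ k ∈ Finset.univ, 0 ≤ C k α * B (e j) (e k) := by
        intro k _
        by_cases hk : C k α = 0
        · rw [hk, zero_mul]
        · refine mul_nonneg_of_nonpos_of_nonpos (hc k) (h.irr_nonpos (h.e_irr j) (h.e_irr k) ?_)
          intro hh
          have hjk : j = k := by
            by_contra hjk
            have := h.Ce' j k hjk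
            rw [← hh, h.Ce] at this
            exact one_ne_zero this
          exact hk (hjk ▸ hj)
      have := (Finset.sum_eq_zero_iff_of_nonneg hnn).1 (le_antisymm h1 (Finset.sum_nonneg hnn)) i
        (Finset.mem_univ i)
      rw [h.symm]
      exact (mul_eq_zero.1 this).resolve_left hi)
  apply h.noniso β Rβ
  rw [h.Bexp]
  refine Finset.sum_eq_zero fun i _ => ?_
  rw [(mul_eq_zero.1 (hz i (Finset.mem_univ i))).resolve_left (hall i), mul_zero]

theorem main (h : ARCore B R δ e L C) : ∃ α ∈ R, 0 < L α ∧
    ∀ γ ∈ R, γ ∈ AddSubmonoid.closure (insert α (Set.range e)) ∨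
      -γ ∈ AddSubmonoid.closure (insert α (Set.range e)) := by
  have hex : ∃ α ∈ Irr R L C, 0 < L α := by
    by_contra hc
    push Not at hc
    have h1 : ∀ m ∈ Mon R L C, L m = 0 := by
      intro m hm
      have := h.gen hm
      induction this using AddSubmonoid.closure_induction with
      | mem x hx => exact le_antisymm (hc x hx) (h.mon_prop hx.1).1
      | zero => simp
      | add x y hx hy ihx ihy =>
        have hle : AddSubmonoid.closure (Irr R L C) ≤ Mon R L C :=
          AddSubmonoid.closure_le.2 fun x hx => hx.1
        rw [map_add, ihx (hle hx), ihy (hle hy), add_zero]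
    have h2 : R ⊆ LinearMap.ker L := by
      intro γ hγ
      rcases h.tri hγ with hh | hh
      · exact h1 _ (AddSubmonoid.subset_closure hh)
      · have := h1 _ (AddSubmonoid.subset_closure hh)
        rw [map_neg, neg_eq_zero] at this
        exact this
    have h3 := Submodule.span_le.2 h2
    rw [h.span] at h3
    have : L δ = 0 := h3 (Submodule.mem_top : δ ∈ ⊤)
    rw [h.Lδ] at this
    exact one_ne_zero this
  obtain ⟨α, hα, hL⟩ := hex
  have hle : AddSubmonoid.closure (Irr R L C) ≤ AddSubmonoid.closure (insert α (Set.range e)) := by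
    refine AddSubmonoid.closure_mono fun x hx => ?_
    rcases h.irr_level hx with h1 | h1
    · exact Or.inl (h.irr_unique hx hα h1 hL)
    · exact Or.inr h1
  refine ⟨α, (irr_pos hα).1, hL, fun γ hγ => ?_⟩
  rcases h.tri hγ with hh | hh
  · exact Or.inl (hle (h.gen (AddSubmonoid.subset_closure hh)))
  · exact Or.inr (hle (h.gen (AddSubmonoid.subset_closure hh)))

end ARCore

/-- Existence and uniqueness of `α₀` completing `Π′` to a base of an
affine root system `R`, with `α₀ ∈ ℕδ′ + ℤΠ′`. -/
theorem stmt2 {V : Type*} [AddCommGroup V] [Module ℝ V]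
    (B : LinearMap.BilinForm ℝ V) (R : Set V) (l : ℕ)
    (hE : IsEARS B R l 1)
    (δ' : V) (hδ0 : δ' ≠ 0) (hδiso : B δ' δ' = 0)
    (hδgen : (AddSubgroup.closure {δ'} : Set V) = (zspan R : Set V) ∩ nullSet B)
    (P' : Set V) (hP'R : P' ⊆ R) (hP'card : P'.ncard = l)
    -- `π(Π′)` is a base of the irreducible finite root system `π(R)`
    (hP'base : IsBaseSet ((LinearMap.ker B).mkQ '' R) ((LinearMap.ker B).mkQ '' P') l) :
    ∃! α₀ : V, α₀ ∈ R ∧ IsBaseSet R (insert α₀ P') (l + 1) ∧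
      ∃ m : ℕ, 0 < m ∧ ∃ μ ∈ AddSubgroup.closure P', α₀ = (m : ℤ) • δ' + μ := by
  classical
  have hfin : P'.Finite := Set.finite_of_ncard_pos (by rw [hP'card]; exact hE.rank_pos)
  have : Fintype P' := hfin.fintype
  have := hE.findim
  set q := (LinearMap.ker B).mkQ with hq
  have hinj : Set.InjOn q P' := by
    refine Set.injOn_of_ncard_image_eq ?_ hfin
    rw [hP'base.2.2.1, hP'card]
  let e : P' → V := Subtype.val
  have hker : ∀ v, B v v = 0 → v ∈ LinearMap.ker B := by
    intro v hv
    have : v ∈ nullSet B := hv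
    rw [hE.null_eq] at this
    exact this
  have hqe : LinearIndependent ℝ (q ∘ e) := by
    have := hP'base.2.2.2.1.comp (fun p : P' => (⟨q p, p, p.2, rfl⟩ : q '' P'))
      (fun a b hab => Subtype.ext (hinj a.2 b.2 (congrArg Subtype.val hab)))
    exact this
  have he : LinearIndependent ℝ e := hqe.of_comp q
  have hδker : δ' ∈ LinearMap.ker B := hker _ hδiso
  let w : Option P' → V := fun o => o.elim δ' e
  have hw : LinearIndependent ℝ w := by
    rw [linearIndependent_option]
    refine ⟨he, fun hmem => hδ0 ?_⟩
    have hd : Disjoint (Submodule.span ℝ (Set.range e)) (LinearMap.ker q) :=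
      Submodule.range_ker_disjoint hqe
    rw [hq, Submodule.ker_mkQ] at hd
    exact Submodule.disjoint_def.1 hd _ hmem hδker
  have hcard : Fintype.card (Option P') = Module.finrank ℝ V := by
    rw [Fintype.card_option, hE.dim_eq, ← hP'card, Set.ncard_eq_toFinset_card', Set.toFinset_card]
  let b := basisOfLinearIndependentOfCardEqFinrank hw hcard
  have hb : ∀ o, b o = w o := fun o => by simp [b]
  let L := b.coord none
  let C : P' → V →ₗ[ℝ] ℝ := fun p => b.coord (some p)
  have hLδ : L δ' = 1 := by
    have : δ' = b none := (hb none).symm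
    simp only [L]
    rw [this]; simp
  have hCδ : ∀ i, C i δ' = 0 := by
    intro i
    have : δ' = b none := (hb none).symm
    simp only [C]
    rw [this]; simp [Finsupp.single_apply]
  have hLe : ∀ i, L (e i) = 0 := by
    intro i
    have : e i = b (some i) := (hb (some i)).symm
    simp only [L]
    rw [this]; simp [Finsupp.single_apply]
  have hCe : ∀ i j, C i (e j) = if j = i then 1 else 0 := by
    intro i j
    have : e j = b (some j) := (hb (some j)).symm
    simp only [C]
    rw [this]; simp [Finsupp.single_apply]
  have hdec : ∀ v, v = L v • δ' + ∑ i, C i v • e i := by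
    intro v
    conv_lhs => rw [← b.sum_repr v]
    rw [Fintype.sum_option]
    simp only [hb]
    rfl
  have hzero : ∀ v, L v = 0 → (∀ i, C i v = 0) → v = 0 := by
    intro v h0 h1
    rw [hdec v, h0]; simp [h1]
  have hnn : ∀ ν ∈ AddSubmonoid.closure P', L ν = 0 ∧ ∀ i, ∃ n : ℕ, C i ν = n := by
    intro ν hν
    induction hν using AddSubmonoid.closure_induction with
    | mem x hx =>
      refine ⟨hLe ⟨x, hx⟩, fun i => ?_⟩
      have := hCe i ⟨x, hx⟩
      change C i x = _ at this
      rw [this]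
      split_ifs
      · exact ⟨1, by simp⟩
      · exact ⟨0, by simp⟩
    | zero => exact ⟨by simp, fun i => ⟨0, by simp⟩⟩
    | add x y _ _ hx hy =>
      refine ⟨by rw [map_add, hx.1, hy.1, add_zero], fun i => ?_⟩
      obtain ⟨a, ha⟩ := hx.2 i
      obtain ⟨c, hc⟩ := hy.2 i
      exact ⟨a + c, by rw [map_add, ha, hc]; push_cast; rfl⟩
  have hform0 : ∀ γ ∈ zspan R, q γ ∈ nnspan (q '' P') →
      ∃ k : ℤ, ∃ ν ∈ AddSubmonoid.closure P', γ = k • δ' + ν := by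
    intro γ hγ hqγ
    have h1 : q γ ∈ AddSubmonoid.map q.toAddMonoidHom (AddSubmonoid.closure P') := by
      rw [AddMonoidHom.map_mclosure]
      exact hqγ
    obtain ⟨ν, hν, hνq⟩ := h1
    have h2 : γ - ν ∈ LinearMap.ker B := by
      rw [← Submodule.ker_mkQ (LinearMap.ker B), LinearMap.mem_ker, map_sub, sub_eq_zero]
      exact hνq.symm
    have h3 : γ - ν ∈ zspan R := by
      refine sub_mem hγ ?_
      have : AddSubmonoid.closure P' ≤ (zspan R).toAddSubmonoid :=
        AddSubmonoid.closure_le.2 fun x hx => AddSubgroup.subset_closure (hP'R hx)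
      exact this hν
    have h4 : γ - ν ∈ (AddSubgroup.closure {δ'} : Set V) := by
      rw [hδgen]
      refine ⟨h3, ?_⟩
      rw [hE.null_eq]
      exact h2
    obtain ⟨k, hk⟩ := AddSubgroup.mem_closure_singleton.1 h4
    exact ⟨k, ν, hν, by rw [hk]; abel⟩
  have hform : ∀ γ ∈ R, (∃ k : ℤ, ∃ ν ∈ AddSubmonoid.closure P', γ = k • δ' + ν) ∨
      (∃ k : ℤ, ∃ ν ∈ AddSubmonoid.closure P', -γ = k • δ' + ν) := by
    intro γ hγ
    have hz : γ ∈ zspan R := AddSubgroup.subset_closure hγ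
    have h1 : q γ ∈ q '' R := ⟨γ, hγ, rfl⟩
    rw [hP'base.2.2.2.2] at h1
    rcases h1 with h1 | h1
    · exact Or.inl (hform0 γ hz h1.2)
    · refine Or.inr (hform0 (-γ) (neg_mem hz) ?_)
      rw [map_neg]
      exact h1.2
  have hcore : ARCore B R δ' e L C :=
    { symm := hE.symm
      psd := hE.posSemidef
      Bδ := fun v => by
        have : B δ' = 0 := hδker
        rw [this]; rfl
      iso := fun v hv => by
        have h1 : q v = 0 := by
          rw [← LinearMap.mem_ker, hq, Submodule.ker_mkQ]; exact hker v hv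
        have h2 : q δ' = 0 := by
          rw [← LinearMap.mem_ker, hq, Submodule.ker_mkQ]; exact hδker
        rw [hdec v] at h1
        rw [map_add, map_smul, h2, smul_zero, zero_add, map_sum] at h1
        simp only [map_smul] at h1
        exact Fintype.linearIndependent_iff.1 hqe _ h1
      noniso := hE.root_nonisotropic
      span := hE.span_eq_top
      integral := hE.integral
      refl := fun α hα β hβ m hm => by
        have h1 : srefl B α β ∈ R := by
          have : srefl B α β ∈ srefl B α '' R := ⟨β, hβ, rfl⟩
          rwa [hE.reflect α hα] at this
        convert h1 using 1
        have h2 : 2 * (B α α)⁻¹ * B α β = m := by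
          have := hE.root_nonisotropic α hα
          field_simp
          linarith
        simp [srefl, h2]
      conn := hE.connected
      eR := fun i => hP'R i.2
      Lδ := hLδ
      Cδ := hCδ
      Le := hLe
      Ce := fun i => by rw [hCe]; simp
      Ce' := fun i j hij => by rw [hCe, if_neg (Ne.symm hij)]
      dec := hdec
      Lint := fun γ hγ => by
        rcases hform γ hγ with ⟨k, ν, hν, hk⟩ | ⟨k, ν, hν, hk⟩
        · refine ⟨k, ?_⟩
          rw [hk, map_add, (hnn ν hν).1, map_zsmul, hLδ]; simp
        · refine ⟨-k, ?_⟩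
          rw [← neg_neg γ, hk, map_neg, map_add, (hnn ν hν).1, map_zsmul, hLδ]; simp
      sgn := fun γ hγ => by
        rcases hform γ hγ with ⟨k, ν, hν, hk⟩ | ⟨k, ν, hν, hk⟩
        · left
          intro i
          obtain ⟨n, hn⟩ := (hnn ν hν).2 i
          refine ⟨n, ?_⟩
          rw [hk, map_add, hn, map_zsmul, hCδ]; simp
        · right
          intro i
          obtain ⟨n, hn⟩ := (hnn ν hν).2 i
          refine ⟨n, ?_⟩
          rw [← neg_neg γ, hk, map_neg, map_add, hn, map_zsmul, hCδ]; simp }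
  have hsub : ∀ μ ∈ AddSubgroup.closure P', L μ = 0 := by
    intro μ hμ
    have : AddSubgroup.closure P' ≤ L.toAddMonoidHom.ker :=
      (AddSubgroup.closure_le _).2 fun x hx => hLe ⟨x, hx⟩
    exact this hμ
  have hmono : AddSubmonoid.closure P' ≤ (AddSubgroup.closure P').toAddSubmonoid :=
    AddSubmonoid.closure_le.2 fun x hx => AddSubgroup.subset_closure hx
  have hrange : Set.range e = P' := Subtype.range_val
  have hins : ∀ α, ∀ x ∈ AddSubmonoid.closure (insert α P'),
      ∃ k : ℕ, ∃ ν ∈ AddSubmonoid.closure P', x = k • α + ν := by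
    intro α x hx
    induction hx using AddSubmonoid.closure_induction with
    | mem x hx =>
      rcases hx with rfl | hx
      · exact ⟨1, 0, zero_mem _, by simp⟩
      · exact ⟨0, x, AddSubmonoid.subset_closure hx, by simp⟩
    | zero => exact ⟨0, 0, zero_mem _, by simp⟩
    | add x y _ _ hx hy =>
      obtain ⟨k, ν, hν, rfl⟩ := hx
      obtain ⟨k', ν', hν', rfl⟩ := hy
      exact ⟨k + k', ν + ν', add_mem hν hν', by rw [add_smul]; abel⟩
  have hLm : ∀ α, (∃ m : ℕ, 0 < m ∧ ∃ μ ∈ AddSubgroup.closure P', α = (m : ℤ) • δ' + μ) →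
      0 < L α := by
    rintro α ⟨m, hm, μ, hμ, rfl⟩
    rw [map_add, hsub μ hμ, map_zsmul, hLδ]
    simpa using hm
  have hU : ∀ α β, IsBaseSet R (insert α P') (l + 1) → β ∈ R → 0 < L α → 0 < L β →
      ∃ k : ℕ, ∃ ν ∈ AddSubmonoid.closure P', β = k • α + ν := by
    intro α β hα hβ ha hb
    rw [hα.2.2.2.2] at hβ
    rcases hβ with h1 | h1
    · exact hins α β h1.2
    · obtain ⟨k, ν, hν, hk⟩ := hins α (-β) h1.2
      exfalso
      have h2 := congrArg L hk
      rw [map_neg, map_add, (hnn ν hν).1, map_nsmul, nsmul_eq_mul] at h2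
      have : 0 ≤ (k : ℝ) * L α := by positivity
      linarith
  obtain ⟨α, hαR, hαL, hgen⟩ := hcore.main
  rw [hrange] at hgen
  have hPα : α ∉ Submodule.span ℝ P' := by
    intro hmem
    have : Submodule.span ℝ P' ≤ LinearMap.ker L := Submodule.span_le.2 fun x hx => hLe ⟨x, hx⟩
    have : L α = 0 := this hmem
    linarith
  have hαbase : IsBaseSet R (insert α P') (l + 1) := by
    refine ⟨Set.insert_subset hαR hP'R, hfin.insert α, ?_, ?_, ?_⟩
    · rw [Set.ncard_insert_of_notMem (fun hh => hPα (Submodule.subset_span hh)) hfin, hP'card]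
    · have h1 : LinearIndepOn ℝ id P' := he
      exact h1.id_insert hPα
    · ext γ
      constructor
      · intro hγ
        rcases hgen γ hγ with h1 | h1
        · exact Or.inl ⟨hγ, h1⟩
        · exact Or.inr ⟨hγ, h1⟩
      · rintro (h1 | h1) <;> exact h1.1
  refine ⟨α, ⟨hαR, hαbase, ?_⟩, ?_⟩
  · have : ∃ k : ℤ, ∃ μ ∈ AddSubgroup.closure P', α = k • δ' + μ := by
      rcases hform α hαR with ⟨k, ν, hν, hk⟩ | ⟨k, ν, hν, hk⟩
      · exact ⟨k, ν, hmono hν, hk⟩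
      · refine ⟨-k, -ν, neg_mem (hmono hν), ?_⟩
        rw [← neg_neg α, hk, neg_smul]; abel
    obtain ⟨k, μ, hμ, hk⟩ := this
    have hk0 : 0 < k := by
      have h1 := hαL
      rw [hk, map_add, hsub μ hμ, map_zsmul, hLδ] at h1
      simpa using h1
    refine ⟨k.toNat, by omega, μ, hμ, ?_⟩
    rw [Int.toNat_of_nonneg hk0.le]
    exact hk
  · rintro β ⟨hβR, hβbase, hβm⟩
    have hβL := hLm β hβm
    obtain ⟨k, ν, hν, hk⟩ := hU α β hαbase hβR hαL hβL
    obtain ⟨k', ν', hν', hk'⟩ := hU β α hβbase hαR hβL hαL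
    have h1 := congrArg L hk
    rw [map_add, (hnn ν hν).1, map_nsmul, nsmul_eq_mul, add_zero] at h1
    have h2 := congrArg L hk'
    rw [map_add, (hnn ν' hν').1, map_nsmul, nsmul_eq_mul, add_zero] at h2
    have h3 : ((k' * k : ℕ) : ℝ) * L α = 1 * L α := by
      push_cast
      rw [mul_assoc, ← h1, ← h2, one_mul]
    have h4 : k' * k = 1 := by exact_mod_cast mul_right_cancel₀ hαL.ne' h3
    have k1 : k = 1 := Nat.eq_one_of_mul_eq_one_left h4
    have k1' : k' = 1 := Nat.eq_one_of_mul_eq_one_right h4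
    rw [k1, one_smul] at hk
    rw [k1', one_smul] at hk'
    have hs : ν + ν' = 0 := by
      have : β = β + (ν + ν') := by
        conv_lhs => rw [hk, hk']
        abel
      simpa using this.symm
    have hν0 : ν = 0 := by
      refine hzero ν (hnn ν hν).1 fun i => ?_
      obtain ⟨n, hn⟩ := (hnn ν hν).2 i
      obtain ⟨n', hn'⟩ := (hnn ν' hν').2 i
      have h5 := congrArg (C i) hs
      rw [map_add, hn, hn', map_zero] at h5
      rw [hn]
      have : (0 : ℝ) ≤ n := by positivity
      have : (0 : ℝ) ≤ n' := by positivity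
      linarith
    rw [hk, hν0, add_zero]
end

section
/- Let R be a reduced elliptic root system of rank l with fundamental-set Π ∪ {a}, and let S be a nonempty proper connected subset of Π. Set V^S := ℝS ⊕ ℝa and R^S := R ∩ V^S. Then (R^S, V^S) is a reduced affine root system, π_a(R^S) is an irreducible finite root system in V/ℝa with base π_a(S), and ℤR^S = ℤS ⊕ ℤk_S a for some positive integer k_S. -/
/-- A fundamental-set `Π ∪ {a}` of a reduced elliptic root system `R` of rank `l`:
(FS1) `a ∈ (ℤR)⁰` and `(ℤR)⁰ = ℤa ⊕ ℤb` for some `b`;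
(FS2) `|Π| = l+1`, `Π ⊆ R` and `π_a(Π)` is a base of the affine root system `π_a(R)`. -/
def IsFundamentalSet {V : Type*} [AddCommGroup V] [Module ℝ V]
    (B : LinearMap.BilinForm ℝ V) (R : Set V) (l : ℕ) (P : Set V) (a : V) : Prop :=
  a ∈ zspan R ∧ B a a = 0 ∧
  (∃ b : V, b ∈ zspan R ∧ B b b = 0 ∧
    ((zspan R : Set V) ∩ nullSet B = {v | ∃ m n : ℤ, v = m • a + n • b}) ∧
    (∀ m n : ℤ, m • a + n • b = 0 → m = 0 ∧ n = 0)) ∧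
  P ⊆ R ∧ P.Finite ∧ P.ncard = l + 1 ∧
  IsBaseSet ((Submodule.span ℝ {a}).mkQ '' R) ((Submodule.span ℝ {a}).mkQ '' P) (l + 1)

/-- Quotient form from a symmetric form vanishing on `W`. -/
def quotFormBy {V : Type*} [AddCommGroup V] [Module ℝ V]
    (B : LinearMap.BilinForm ℝ V) (W : Submodule ℝ V)
    (h : ∀ w ∈ W, B w = 0) (hsymm : ∀ u v, B u v = B v u) :
    LinearMap.BilinForm ℝ (V ⧸ W) :=
  quotForm W B h (fun v w hw => by rw [hsymm v w, h w hw]; simp)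

/-- Working hypotheses in coordinates: `e` is the basis `{a} ∪ Π` of `V`. -/
structure Core {V : Type*} [AddCommGroup V] [Module ℝ V]
    (B : LinearMap.BilinForm ℝ V) (R : Set V) {ι : Type*} [Fintype ι]
    (e : Module.Basis (Unit ⊕ ι) ℝ V) : Prop where
  symm : ∀ u v, B u v = B v u
  psd : ∀ v, 0 ≤ B v v
  null : ∀ v, B v v = 0 → B v = 0
  ha : B (e (Sum.inl ())) = 0
  ker2 : ∀ v w, B v v = 0 → B w w = 0 → ∀ i, e.repr v (Sum.inr i) ≠ 0 →
    ∃ x y : ℝ, w = x • v + y • e (Sum.inl ())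
  noniso : ∀ α ∈ R, B α α ≠ 0
  integral : ∀ α ∈ R, ∀ β ∈ R, ∃ m : ℤ, 2 * B α β = (m : ℝ) * B α α
  refl : ∀ α ∈ R, ∀ β ∈ R, β - (2 * (B α α)⁻¹ * B α β) • α ∈ R
  conn : ∀ S' ⊆ R, S'.Nonempty → S' ≠ R → ∃ x ∈ S', ∃ y ∈ R \ S', B x y ≠ 0
  red : ∀ α ∈ R, (2 : ℤ) • α ∉ R
  span : Submodule.span ℝ R = ⊤
  hP : ∀ i, e (Sum.inr i) ∈ R
  sign : ∀ β ∈ R, (∀ i, ∃ n : ℕ, e.repr β (Sum.inr i) = n) ∨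
    (∀ i, ∃ n : ℕ, e.repr β (Sum.inr i) = -n)

namespace Core

variable {V : Type*} [AddCommGroup V] [Module ℝ V]
    {B : LinearMap.BilinForm ℝ V} {R : Set V} {ι : Type*} [Fintype ι]
    {e : Module.Basis (Unit ⊕ ι) ℝ V}

theorem expand (e : Module.Basis (Unit ⊕ ι) ℝ V) (v : V) :
    v = e.repr v (Sum.inl ()) • e (Sum.inl ()) + ∑ i, e.repr v (Sum.inr i) • e (Sum.inr i) := by
  conv_lhs => rw [← e.sum_repr v]
  rw [Fintype.sum_sum_type]
  simp only [Finset.univ_unique, Finset.sum_singleton]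

theorem single_ne {i j : ι} (hij : i ≠ j) (x : ℝ) :
    (Finsupp.single (Sum.inr i : Unit ⊕ ι) x) (Sum.inr j) = 0 := by
  classical
  rw [Finsupp.single_apply, if_neg]
  simpa using hij

theorem ha' (h : Core B R e) (v : V) : B v (e (Sum.inl ())) = 0 := by
  rw [h.symm, h.ha]; simp

theorem form_right (h : Core B R e) (u v : V) :
    B u v = ∑ i, e.repr v (Sum.inr i) * B u (e (Sum.inr i)) := by
  conv_lhs => rw [expand e v]
  simp [h.ha']

theorem form_both (h : Core B R e) (u v : V) :
    B u v = ∑ i, ∑ j, e.repr u (Sum.inr i) * e.repr v (Sum.inr j) *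
      B (e (Sum.inr i)) (e (Sum.inr j)) := by
  rw [h.symm u v, h.form_right v u]
  refine Finset.sum_congr rfl fun i _ => ?_
  rw [h.symm, h.form_right _ v, Finset.mul_sum]
  exact Finset.sum_congr rfl fun j _ => by ring

theorem pos (h : Core B R e) {α : V} (hα : α ∈ R) : 0 < B α α :=
  lt_of_le_of_ne (h.psd α) (Ne.symm (h.noniso α hα))

/-- reflection with an integer coefficient -/
theorem refl_int (h : Core B R e) {α β : V} (hα : α ∈ R) (hβ : β ∈ R) :
    ∃ m : ℤ, 2 * B α β = (m : ℝ) * B α α ∧ β - (m : ℝ) • α ∈ R := by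
  obtain ⟨m, hm⟩ := h.integral α hα β hβ
  refine ⟨m, hm, ?_⟩
  have := h.refl α hα β hβ
  have h0 := h.noniso α hα
  have e1 : 2 * (B α α)⁻¹ * B α β = m := by
    field_simp
    linarith
  rwa [e1] at this

theorem neg (h : Core B R e) {α : V} (hα : α ∈ R) : -α ∈ R := by
  obtain ⟨m, hm, hr⟩ := h.refl_int hα hα
  have h0 := h.noniso α hα
  have : (m : ℝ) = 2 := by
    apply mul_right_cancel₀ h0; linarith
  rw [this] at hr
  convert hr using 1
  module

theorem offdiag (h : Core B R e) {i j : ι} (hij : i ≠ j) :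
    B (e (Sum.inr i)) (e (Sum.inr j)) ≤ 0 := by
  obtain ⟨m, hm, hr⟩ := h.refl_int (h.hP i) (h.hP j)
  have hp := h.pos (h.hP i)
  by_contra hc
  push Not at hc
  have hm0 : (0 : ℝ) < m := by
    by_contra hm0
    push Not at hm0
    nlinarith
  rcases h.sign _ hr with hs | hs
  · obtain ⟨n, hn⟩ := hs i
    simp [single_ne hij, single_ne hij.symm] at hn
    have : (0 : ℝ) ≤ n := n.cast_nonneg
    linarith
  · obtain ⟨n, hn⟩ := hs j
    simp [single_ne hij, single_ne hij.symm] at hn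
    have : (0 : ℝ) ≤ n := n.cast_nonneg
    linarith

/-- reflecting in a simple root on which `β` is positive -/
theorem simple_refl (h : Core B R e) {β : V} (hβ : β ∈ R) {j : ι}
    (hj : 0 < B β (e (Sum.inr j))) :
    ∃ m : ℝ, 1 ≤ m ∧ β - m • e (Sum.inr j) ∈ R ∧
      e.repr (β - m • e (Sum.inr j)) (Sum.inr j) = e.repr β (Sum.inr j) - m ∧
      e.repr (β - m • e (Sum.inr j)) (Sum.inl ()) = e.repr β (Sum.inl ()) ∧
      (∀ i, i ≠ j → e.repr (β - m • e (Sum.inr j)) (Sum.inr i) = e.repr β (Sum.inr i)) ∧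
      B (β - m • e (Sum.inr j)) (e (Sum.inr j)) = - B β (e (Sum.inr j)) := by
  obtain ⟨m, hm, hr⟩ := h.refl_int (h.hP j) hβ
  have hp := h.pos (h.hP j)
  rw [h.symm] at hj
  have hm0 : (0 : ℝ) < m := by
    by_contra hm0
    push Not at hm0
    nlinarith
  refine ⟨m, ?_, hr, ?_, ?_, ?_, ?_⟩
  · have : 0 < m := by exact_mod_cast hm0
    exact_mod_cast this
  · simp
  · simp
  · intro i hi
    simp [single_ne hi.symm]
  · simp only [map_sub, map_smul, LinearMap.sub_apply, LinearMap.smul_apply, smul_eq_mul]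
    rw [h.symm β]; linarith

theorem nonneg_or (h : Core B R e) {β : V} (hβ : β ∈ R) :
    (∀ i, 0 ≤ e.repr β (Sum.inr i)) ∨ (∀ i, e.repr β (Sum.inr i) ≤ 0) := by
  rcases h.sign β hβ with hs | hs
  · left; intro i; obtain ⟨n, hn⟩ := hs i; rw [hn]; positivity
  · right; intro i; obtain ⟨n, hn⟩ := hs i; rw [hn]; simp

open Classical in
/-- no proper support for isotropic vectors -/
theorem pd (h : Core B R e) (v : V) (hv : B v v = 0) (j₀ : ι) (hj₀ : e.repr v (Sum.inr j₀) = 0) :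
    ∀ i, e.repr v (Sum.inr i) = 0 := by
  by_contra hne
  push Not at hne
  obtain ⟨i₀, hi₀⟩ := hne
  set c : ι → ℝ := fun i => e.repr v (Sum.inr i) with hc
  set u : V := ∑ i, |c i| • e (Sum.inr i) with hu
  have hur : ∀ i, e.repr u (Sum.inr i) = |c i| := by
    intro i
    simp [hu, Finsupp.single_apply]
  have huu : B u u = 0 := by
    apply le_antisymm _ (h.psd u)
    rw [← hv, h.form_both u u, h.form_both v v]
    refine Finset.sum_le_sum fun i _ => Finset.sum_le_sum fun j _ => ?_
    rw [hur, hur]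
    change _ ≤ c i * c j * _
    by_cases hij : i = j
    · subst hij
      rw [abs_mul_abs_self]
    · rw [← abs_mul]
      exact mul_le_mul_of_nonpos_right (le_abs_self _) (h.offdiag hij)
  have hub := h.null u huu
  have orth : ∀ i j, c i ≠ 0 → c j = 0 → B (e (Sum.inr i)) (e (Sum.inr j)) = 0 := by
    intro i j hi hj
    have h1 : B (e (Sum.inr j)) u = 0 := by rw [h.symm, hub]; simp
    rw [h.form_right] at h1
    have h2 := (Finset.sum_eq_zero_iff_of_nonpos (fun k _ => by
      rw [hur]
      by_cases hk : j = k
      · subst hk; simp [hj]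
      · exact mul_nonpos_of_nonneg_of_nonpos (abs_nonneg _) (h.offdiag hk))).1 h1 i (Finset.mem_univ i)
    rw [hur] at h2
    rw [h.symm]
    exact (mul_eq_zero.1 h2).resolve_left (abs_ne_zero.2 hi)
  -- positive definiteness on the complement
  have pdJ : ∀ w, B w w = 0 → (∀ i, c i ≠ 0 → e.repr w (Sum.inr i) = 0) →
      ∀ i, e.repr w (Sum.inr i) = 0 := by
    intro w hw hws i
    obtain ⟨x, y, rfl⟩ := h.ker2 v w hv hw i₀ hi₀
    have := hws i₀ hi₀
    simp at this
    have hx : x = 0 := this.resolve_right hi₀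
    simp [hx]
  have main : ∀ n : ℕ, ∀ β ∈ R, (∀ i, 0 ≤ e.repr β (Sum.inr i)) →
      (∃ i, c i ≠ 0 ∧ e.repr β (Sum.inr i) ≠ 0) →
      (∑ j, if c j = 0 then e.repr β (Sum.inr j) else 0) ≤ n →
      ∀ j, c j = 0 → e.repr β (Sum.inr j) = 0 := by
    intro n
    induction n with
    | zero =>
      intro β hβ hpos _ hs j hj
      have h0 : ∀ j ∈ Finset.univ, 0 ≤ (if c j = 0 then e.repr β (Sum.inr j) else 0) := by
        intro j _; split_ifs <;> simp [hpos]
      have := (Finset.sum_eq_zero_iff_of_nonneg h0).1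
        (le_antisymm (by simpa using hs) (Finset.sum_nonneg h0)) j (Finset.mem_univ j)
      simpa [hj] using this
    | succ n ih =>
      intro β hβ hpos hI hs
      by_contra hcon
      push Not at hcon
      obtain ⟨j₁, hj₁, hj₁'⟩ := hcon
      set β₂ : V := ∑ j, (if c j = 0 then e.repr β (Sum.inr j) else 0) • e (Sum.inr j) with hβ₂
      have hr2 : ∀ i, e.repr β₂ (Sum.inr i) = if c i = 0 then e.repr β (Sum.inr i) else 0 := by
        intro i
        simp only [hβ₂, map_sum, map_smul, Module.Basis.repr_self, Finsupp.coe_finsetSum,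
          Finset.sum_apply, Finsupp.smul_apply, Finsupp.single_apply]
        simp
      have hpos2 : 0 < B β₂ β₂ := by
        refine lt_of_le_of_ne (h.psd _) fun h0 => hj₁' ?_
        have := pdJ β₂ h0.symm (fun i hi => by rw [hr2, if_neg hi]) j₁
        rwa [hr2, if_pos hj₁] at this
      have heq : ∀ j, c j = 0 → B β₂ (e (Sum.inr j)) = B β (e (Sum.inr j)) := by
        intro j hj
        rw [h.symm, h.symm β, h.form_right _ β₂, h.form_right _ β]
        refine Finset.sum_congr rfl fun i _ => ?_
        rw [hr2]
        split_ifs with hci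
        · rfl
        · rw [h.symm, orth i j hci hj]; simp
      obtain ⟨j, hj, hjp⟩ : ∃ j, c j = 0 ∧ 0 < B β (e (Sum.inr j)) := by
        by_contra hcon
        push Not at hcon
        apply absurd hpos2
        rw [not_lt, h.form_right]
        refine Finset.sum_nonpos fun i _ => ?_
        rw [hr2]
        split_ifs with hci
        · rw [heq i hci]
          exact mul_nonpos_of_nonneg_of_nonpos (hpos i) (hcon i hci)
        · simp
      obtain ⟨m, hm, hγ, hγj, -, hγi, hγB⟩ := h.simple_refl hβ hjp
      set γ := β - m • e (Sum.inr j)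
      obtain ⟨i₁, hi₁, hi₁'⟩ := hI
      have hij : i₁ ≠ j := by rintro rfl; exact hi₁ hj
      have hγpos : ∀ i, 0 ≤ e.repr γ (Sum.inr i) := by
        rcases h.nonneg_or hγ with hs | hs
        · exact hs
        · have := hs i₁
          rw [hγi i₁ hij] at this
          exact absurd (le_antisymm this (hpos i₁)) hi₁'
      have hγ0 := ih γ hγ hγpos ⟨i₁, hi₁, by rw [hγi i₁ hij]; exact hi₁'⟩ (by
        have : (∑ k, if c k = 0 then e.repr γ (Sum.inr k) else 0) =
            (∑ k, if c k = 0 then e.repr β (Sum.inr k) else 0) - m := by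
          have h1 : ∀ k, (if c k = 0 then e.repr γ (Sum.inr k) else 0) =
              (if c k = 0 then e.repr β (Sum.inr k) else 0) - (if k = j then m else 0) := by
            intro k
            by_cases hk : k = j
            · subst hk; simp [hj, hγj]
            · simp [hk, hγi k hk]
          rw [Finset.sum_congr rfl fun k _ => h1 k, Finset.sum_sub_distrib]
          simp
        rw [this]
        push_cast at hs
        linarith)
      have : B γ (e (Sum.inr j)) = 0 := by
        rw [h.symm, h.form_right]
        refine Finset.sum_eq_zero fun i _ => ?_
        by_cases hci : c i = 0
        · rw [hγ0 i hci]; simp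
        · rw [h.symm, orth i j hci hj]; simp
      linarith
  have all : ∀ β ∈ R, (∃ i, c i ≠ 0 ∧ e.repr β (Sum.inr i) ≠ 0) →
      ∀ j, c j = 0 → e.repr β (Sum.inr j) = 0 := by
    intro β hβ hI
    rcases h.nonneg_or hβ with hs | hs
    · obtain ⟨n, hn⟩ := exists_nat_ge (∑ j, if c j = 0 then e.repr β (Sum.inr j) else 0)
      exact main n β hβ hs hI hn
    · obtain ⟨n, hn⟩ := exists_nat_ge (∑ j, if c j = 0 then e.repr (-β) (Sum.inr j) else 0)
      intro j hj
      have := main n (-β) (h.neg hβ) (fun i => by simpa using hs i) (by simpa using hI) hn j hj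
      simpa using this
  obtain ⟨x, ⟨hx, j, hj, hxj⟩, y, ⟨hy, hy'⟩, hxy⟩ :=
    h.conn {β | β ∈ R ∧ ∃ j, c j = 0 ∧ e.repr β (Sum.inr j) ≠ 0} (fun _ hx => hx.1)
      ⟨e (Sum.inr j₀), h.hP j₀, j₀, hj₀, by simp⟩ (by
        intro heq
        have : e (Sum.inr i₀) ∈ R := h.hP i₀
        rw [← heq] at this
        obtain ⟨_, j, hj, hj'⟩ := this
        exact hj' (all _ (h.hP i₀) ⟨i₀, hi₀, by simp⟩ j hj))
  apply hxy
  rw [h.form_both]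
  refine Finset.sum_eq_zero fun i _ => Finset.sum_eq_zero fun k _ => ?_
  have hxi : c i ≠ 0 → e.repr x (Sum.inr i) = 0 := by
    intro hi
    by_contra hc
    exact hxj (all x hx ⟨i, hi, hc⟩ j hj)
  have hyk : c k = 0 → e.repr y (Sum.inr k) = 0 := by
    intro hk
    by_contra hc
    exact hy' ⟨hy, k, hk, hc⟩
  by_cases hi : c i = 0
  · by_cases hk : c k = 0
    · simp [hyk hk]
    · rw [h.symm, orth k i hk hi]; simp
  · simp [hxi hi]

theorem exists_translate (h : Core B R e) :
    ∃ γ ∈ R, ∃ c : ℝ, c ≠ 0 ∧ γ + c • e (Sum.inl ()) ∈ R := by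
  by_contra hno
  push Not at hno
  have hno' : ∀ γ ∈ R, ∀ c : ℝ, γ + c • e (Sum.inl ()) ∈ R → c = 0 := by
    intro γ hγ c hc
    by_contra h0
    exact hno γ hγ c h0 hc
  have main : ∀ n : ℕ, ∀ β ∈ R, (∀ i, 0 ≤ e.repr β (Sum.inr i)) →
      (∑ j, e.repr β (Sum.inr j)) ≤ n → e.repr β (Sum.inl ()) = 0 := by
    intro n
    induction n with
    | zero =>
      intro β hβ hpos hs
      have h0 := (Finset.sum_eq_zero_iff_of_nonneg (fun j _ => hpos j)).1
        (le_antisymm (by simpa using hs) (Finset.sum_nonneg (fun j _ => hpos j)))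
      exfalso
      apply h.noniso β hβ
      rw [h.form_right]
      exact Finset.sum_eq_zero fun i hi => by rw [h0 i hi]; simp
    | succ n ih =>
      intro β hβ hpos hs
      obtain ⟨j, hjp⟩ : ∃ j, 0 < B β (e (Sum.inr j)) := by
        by_contra hcon
        push Not at hcon
        apply absurd (h.pos hβ)
        rw [not_lt, h.form_right]
        exact Finset.sum_nonpos fun i _ =>
          mul_nonpos_of_nonneg_of_nonpos (hpos i) (hcon i)
      obtain ⟨m, hm, hγ, hγj, hγa, hγi, hγB⟩ := h.simple_refl hβ hjp
      set γ := β - m • e (Sum.inr j)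
      rcases h.nonneg_or hγ with hγs | hγs
      · rw [← hγa]
        refine ih γ hγ hγs ?_
        classical
        have : (∑ k, e.repr γ (Sum.inr k)) = (∑ k, e.repr β (Sum.inr k)) - m := by
          have h1 : ∀ k, e.repr γ (Sum.inr k) =
              e.repr β (Sum.inr k) - (if k = j then m else 0) := by
            intro k
            by_cases hk : k = j
            · subst hk; simp [hγj]
            · simp [hk, hγi k hk]
          rw [Finset.sum_congr rfl fun k _ => h1 k, Finset.sum_sub_distrib]
          simp
        rw [this]
        push_cast at hs
        linarith
      · have hz : ∀ i, i ≠ j → e.repr β (Sum.inr i) = 0 := by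
          intro i hi
          apply le_antisymm _ (hpos i)
          rw [← hγi i hi]; exact hγs i
        set k := e.repr β (Sum.inr j) with hk
        set c := e.repr β (Sum.inl ()) with hc
        have hβe : β = k • e (Sum.inr j) + c • e (Sum.inl ()) := by
          conv_lhs => rw [expand e β]
          rw [Finset.sum_eq_single j (fun i _ hi => by rw [hz i hi]; simp) (by simp)]
          rw [add_comm]
        have hp := h.pos (h.hP j)
        have hBj : B β (e (Sum.inr j)) = k * B (e (Sum.inr j)) (e (Sum.inr j)) := by
          rw [hβe]; simp [h.ha]
        have hBB : B β β = k * (k * B (e (Sum.inr j)) (e (Sum.inr j))) := by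
          nth_rewrite 2 [hβe]; simp [h.ha', hBj]
        have hk0 : 0 < k := by
          refine lt_of_le_of_ne (hpos j) fun h0 => ?_
          rw [← h0] at hBj
          simp at hBj
          linarith
        obtain ⟨N, hN⟩ : ∃ N : ℕ, k = N := by
          rcases h.sign β hβ with hs | hs
          · exact hs j
          · obtain ⟨n, hn⟩ := hs j
            have : (0 : ℝ) ≤ n := n.cast_nonneg
            rw [← hk] at hn
            linarith
        obtain ⟨q, hq, hqR⟩ := h.refl_int hβ (h.hP j)
        have hqk : (q : ℝ) * k = 2 := by
          rw [hBj, hBB] at hq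
          have : (k * B (e (Sum.inr j)) (e (Sum.inr j))) ≠ 0 := by positivity
          apply mul_right_cancel₀ this
          linarith
        have hqN : q * (N : ℤ) = 2 := by rw [hN] at hqk; exact_mod_cast hqk
        have hN2 : N ≤ 2 := by
          have : (N : ℤ) ≤ 2 := Int.le_of_dvd (by norm_num) ⟨q, by linarith⟩
          exact_mod_cast this
        interval_cases N
        · simp at hN; linarith
        · apply hno' _ (h.hP j)
          rw [hN] at hβe
          have : e (Sum.inr j) + c • e (Sum.inl ()) = β := by rw [hβe]; simp
          rw [this]; exact hβ
        · have hq1 : q = 1 := by push_cast at hqN; omega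
          rw [hN] at hβe
          have h1 : -(e (Sum.inr j)) + (-c) • e (Sum.inl ()) ∈ R := by
            have : e (Sum.inr j) - (q : ℝ) • β = -(e (Sum.inr j)) + (-c) • e (Sum.inl ()) := by
              rw [hβe, hq1]; push_cast; module
            rw [← this]; exact hqR
          have := hno' _ (h.neg (h.hP j)) _ h1
          linarith
  have all : ∀ β ∈ R, e.repr β (Sum.inl ()) = 0 := by
    intro β hβ
    rcases h.nonneg_or hβ with hs | hs
    · obtain ⟨n, hn⟩ := exists_nat_ge (∑ j, e.repr β (Sum.inr j))
      exact main n β hβ hs hn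
    · obtain ⟨n, hn⟩ := exists_nat_ge (∑ j, e.repr (-β) (Sum.inr j))
      have := main n (-β) (h.neg hβ) (fun i => by simpa using hs i) hn
      simpa using this
  have hall : ∀ v, e.coord (Sum.inl ()) v = 0 := by
    intro v
    have hv : v ∈ Submodule.span ℝ R := by rw [h.span]; trivial
    have hle : Submodule.span ℝ R ≤ LinearMap.ker (e.coord (Sum.inl ())) :=
      Submodule.span_le.2 fun β hβ => by simpa using all β hβ
    exact hle hv
  have := hall (e (Sum.inl ()))
  simp at this

theorem translate (h : Core B R e) {α : V} (hα : α ∈ R) :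
    ∃ c : ℝ, c ≠ 0 ∧ α + c • e (Sum.inl ()) ∈ R := by
  by_contra hcon
  obtain ⟨γ, hγ, hγ'⟩ := h.exists_translate
  obtain ⟨x, ⟨hx, c, hc, hxc⟩, y, ⟨hy, hy'⟩, hxy⟩ :=
    h.conn {β | β ∈ R ∧ ∃ c : ℝ, c ≠ 0 ∧ β + c • e (Sum.inl ()) ∈ R} (fun _ hx => hx.1)
      ⟨γ, hγ, hγ'⟩ (by
        intro heq
        rw [← heq] at hα
        exact hcon hα.2)
  apply hy'
  refine ⟨hy, ?_⟩
  have h1 := h.refl _ hxc y hy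
  have h2 := h.refl _ hx _ h1
  have hx0 := h.noniso x hx
  refine ⟨-(2 * (B x x)⁻¹ * B x y) * c, by simp [hx0, hxy, hc], ?_⟩
  convert h2 using 1
  simp only [map_add, map_sub, map_smul, LinearMap.add_apply, LinearMap.smul_apply, h.ha, h.ha',
    LinearMap.zero_apply, smul_eq_mul, mul_zero, add_zero]
  have : 2 * (B x x)⁻¹ * (B x y - 2 * (B x x)⁻¹ * B x y * B x x) = -(2 * (B x x)⁻¹ * B x y) := by
    field_simp; ring
  rw [this]
  module

end Core

/-- the lattice `ℤR` meets `ℝa` in `ℤa` -/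
theorem lattice_line {V : Type*} [AddCommGroup V] [Module ℝ V]
    {B : LinearMap.BilinForm ℝ V} {R : Set V} {l : ℕ}
    (hE : IsEARS B R l 2) {P : Set V} {a : V} (hfs : IsFundamentalSet B R l P a)
    (c : ℝ) (hc : c • a ∈ zspan R) : ∃ m : ℤ, c = m := by
  obtain ⟨haR, haa, ⟨b, hbR, hbb, hset, hind⟩, -⟩ := hfs
  have ha0 : a ≠ 0 := by
    rintro rfl
    have := hind 1 0 (by simp)
    simp at this
  have hcn : c • a ∈ (zspan R : Set V) ∩ nullSet B := by
    refine ⟨hc, ?_⟩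
    have : B (c • a) (c • a) = 0 := by simp [haa]
    exact this
  rw [hset] at hcn
  obtain ⟨m, n, hmn⟩ := hcn
  refine ⟨m, ?_⟩
  suffices hn : n = 0 by
    subst hn
    simp only [zero_smul, add_zero] at hmn
    rw [← Int.cast_smul_eq_zsmul ℝ] at hmn
    exact smul_left_injective ℝ ha0 hmn
  -- a basis of the lattice
  have := hE.findim
  have := hE.free
  have : Module.Finite ℤ (zspan R) := Module.finite_of_finrank_pos (by rw [hE.rank_eq]; omega)
  let e := Module.finBasis ℤ (zspan R)
  have hli : LinearIndependent ℝ (fun i => (e i : V)) := by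
    apply linearIndependent_of_top_le_span_of_card_eq_finrank
    · rw [← hE.span_eq_top]
      apply Submodule.span_le.2
      intro β hβ
      have hβ' : β ∈ zspan R := AddSubgroup.subset_closure hβ
      have := congrArg (fun x : zspan R => (x : V)) (e.sum_repr ⟨β, hβ'⟩)
      simp only [AddSubgroup.val_finsetSum, AddSubgroup.coe_zsmul] at this
      rw [← this]
      refine Submodule.sum_mem _ fun i _ => ?_
      rw [← Int.cast_smul_eq_zsmul ℝ]
      exact Submodule.smul_mem _ _ (Submodule.subset_span ⟨i, rfl⟩)
    · rw [Fintype.card_fin, hE.rank_eq, hE.dim_eq]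
  have hexp : ∀ x : zspan R, (x : V) = ∑ i, (e.repr x i : ℝ) • (e i : V) := by
    intro x
    have := congrArg (fun x : zspan R => (x : V)) (e.sum_repr x)
    simp only [AddSubgroup.val_finsetSum, AddSubgroup.coe_zsmul] at this
    conv_lhs => rw [← this]
    exact Finset.sum_congr rfl fun i _ => by rw [Int.cast_smul_eq_zsmul ℝ]
  set A : zspan R := ⟨a, haR⟩
  set D : zspan R := ⟨b, hbR⟩
  have key : ∀ i, (c - m) * (e.repr A i : ℝ) = n * (e.repr D i : ℝ) := by
    have h1 : ∑ i, ((c - m) * (e.repr A i : ℝ) - n * (e.repr D i : ℝ)) • (e i : V) = 0 := by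
      have hA : a = _ := hexp A
      have hD : b = _ := hexp D
      have : (c - m) • a - (n : ℝ) • b = 0 := by
        rw [sub_smul, hmn, Int.cast_smul_eq_zsmul, Int.cast_smul_eq_zsmul]; abel
      rw [hA, hD, Finset.smul_sum, Finset.smul_sum, ← Finset.sum_sub_distrib] at this
      rw [← this]
      exact Finset.sum_congr rfl fun i _ => by module
    intro i
    have := Fintype.linearIndependent_iff.1 hli _ h1 i
    linarith
  obtain ⟨i, hi⟩ : ∃ i, e.repr A i ≠ 0 := by
    by_contra hcon
    push Not at hcon
    have : A = 0 := by
      apply e.repr.injective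
      ext i; simp [hcon i]
    exact ha0 (congrArg (fun x : zspan R => (x : V)) this)
  have hrel : (-(n * e.repr D i)) • a + (e.repr A i * n) • b = 0 := by
    have hcm : (c - m) • a = (n : ℝ) • b := by
      rw [sub_smul, hmn, Int.cast_smul_eq_zsmul, Int.cast_smul_eq_zsmul]; abel
    rw [← Int.cast_smul_eq_zsmul ℝ, ← Int.cast_smul_eq_zsmul ℝ]
    push_cast
    rw [← key i, mul_smul, ← hcm]
    module
  have := (hind _ _ hrel).2
  exact (mul_eq_zero.1 this).resolve_left hi

theorem build_core {V : Type*} [AddCommGroup V] [Module ℝ V]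
    {B : LinearMap.BilinForm ℝ V} {R : Set V} {l : ℕ}
    (hE : IsEARS B R l 2) (hred : IsReducedRS R)
    {P : Set V} {a : V} (hfs : IsFundamentalSet B R l P a) [Fintype P] :
    ∃ e : Module.Basis (Unit ⊕ P) ℝ V, e (Sum.inl ()) = a ∧ (∀ p, e (Sum.inr p) = p) ∧
      LinearIndependent ℝ
        (Submodule.Quotient.mk ∘ ((↑) : P → V) : P → V ⧸ Submodule.span ℝ {a}) ∧
      Core B R e := by
  obtain ⟨haR, haa, ⟨b, hbR, hbb, hset, hind⟩, hPR, hPf, hPc, hbase⟩ := hfs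
  obtain ⟨hb1, hb2, hb3, hb4, hb5⟩ := hbase
  have := hE.findim
  have ha0 : a ≠ 0 := by
    rintro rfl
    have := hind 1 0 (by simp)
    simp at this
  have hinj : Set.InjOn (Submodule.span ℝ {a}).mkQ P :=
    Set.injOn_of_ncard_image_eq (by rw [hb3, hPc]) hPf
  have hliQ : LinearIndependent ℝ
      (Submodule.Quotient.mk ∘ ((↑) : P → V) : P → V ⧸ Submodule.span ℝ {a}) := by
    have h1 : Function.Injective (fun p : P =>
        (⟨(Submodule.span ℝ {a}).mkQ p, p, p.2, rfl⟩ : (Submodule.span ℝ {a}).mkQ '' P)) := by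
      intro p q hpq
      exact Subtype.ext (hinj p.2 q.2 (congrArg Subtype.val hpq))
    exact hb4.comp _ h1
  have hliA : LinearIndependent ℝ
      (fun _ : Unit => (⟨a, Submodule.mem_span_singleton_self a⟩ : Submodule.span ℝ {a})) := by
    apply LinearIndependent.of_subsingleton ()
    intro h
    exact ha0 (congrArg Subtype.val h)
  have hli := hliA.sumElim_of_quotient _ hliQ
  have hcard : Fintype.card (Unit ⊕ P) = Module.finrank ℝ V := by
    have : Fintype.card P = l + 1 := by
      rw [← hPc, ← Nat.card_coe_set_eq, Nat.card_eq_fintype_card]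
    rw [hE.dim_eq, Fintype.card_sum, this, Fintype.card_unit]
    omega
  let e := basisOfLinearIndependentOfCardEqFinrank hli hcard
  have hea : e (Sum.inl ()) = a := by simp [e]
  have hep : ∀ p, e (Sum.inr p) = p := by intro p; simp [e]
  have hnull : ∀ v, B v v = 0 → B v = 0 := by
    intro v hv
    have : v ∈ nullSet B := hv
    rw [hE.null_eq] at this
    exact this
  have hBa : B a = 0 := hnull a haa
  refine ⟨e, hea, hep, hliQ, ?_⟩
  have hnn : ∀ μ ∈ AddSubmonoid.closure P, ∀ i, ∃ n : ℕ, e.repr μ (Sum.inr i) = n := by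
    intro μ hμ
    induction hμ using AddSubmonoid.closure_induction with
    | mem x hx =>
      intro i
      have : x = e (Sum.inr ⟨x, hx⟩) := by rw [hep]
      by_cases hi : (⟨x, hx⟩ : P) = i
      · refine ⟨1, ?_⟩; rw [this, hi]; simp
      · refine ⟨0, ?_⟩; rw [this, Module.Basis.repr_self, Core.single_ne hi]; simp
    | zero => intro i; exact ⟨0, by simp⟩
    | add x y _ _ hx hy =>
      intro i
      obtain ⟨n, hn⟩ := hx i
      obtain ⟨m, hm⟩ := hy i
      exact ⟨n + m, by simp [hn, hm]⟩
  have hq : ∀ x y : V, (Submodule.span ℝ {a}).mkQ x = (Submodule.span ℝ {a}).mkQ y →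
      ∀ i, e.repr x (Sum.inr i) = e.repr y (Sum.inr i) := by
    intro x y hxy i
    rw [← sub_eq_zero, ← map_sub, Submodule.mkQ_apply, Submodule.Quotient.mk_eq_zero,
      Submodule.mem_span_singleton] at hxy
    obtain ⟨t, ht⟩ := hxy
    have : x = y + t • e (Sum.inl ()) := by rw [hea, ht]; abel
    rw [this]; simp
  refine ⟨hE.symm, hE.posSemidef, hnull, by rw [hea, hBa], ?_, hE.root_nonisotropic, hE.integral,
    ?_, hE.connected, hred, hE.span_eq_top, fun p => by rw [hep]; exact hPR p.2, ?_⟩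
  · intro v w hv hw i hi
    set v' : LinearMap.ker B := ⟨v, hnull v hv⟩
    set w' : LinearMap.ker B := ⟨w, hnull w hw⟩
    set a' : LinearMap.ker B := ⟨a, hBa⟩
    have hl : LinearIndependent ℝ ![v', a'] := by
      rw [LinearIndependent.pair_iff]
      intro s t hst
      have h1 : s • v + t • e (Sum.inl ()) = 0 := by rw [hea]; exact congrArg Subtype.val hst
      have h2 := congrArg (fun x => e.repr x (Sum.inr i)) h1
      simp at h2
      have hs := h2.resolve_right hi
      subst hs
      rw [hea] at h1
      simp [ha0] at h1
      exact ⟨rfl, h1⟩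
    have hsp := hl.span_eq_top_of_card_eq_finrank (by simp [hE.dim_null])
    have hw' : w' ∈ Submodule.span ℝ (Set.range ![v', a']) := by rw [hsp]; trivial
    rw [Matrix.range_cons, Matrix.range_cons, Matrix.range_empty, Set.union_empty,
      Set.singleton_union, Submodule.mem_span_pair] at hw'
    obtain ⟨x, y, hxy⟩ := hw'
    refine ⟨x, y, ?_⟩
    rw [hea]
    exact (congrArg Subtype.val hxy).symm
  · intro α hα β hβ
    have : srefl B α β ∈ srefl B α '' R := ⟨β, hβ, rfl⟩
    rw [hE.reflect α hα] at this
    simpa [srefl] using this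
  · intro β hβ
    have hβ' : (Submodule.span ℝ {a}).mkQ β ∈ (Submodule.span ℝ {a}).mkQ '' R := ⟨β, hβ, rfl⟩
    have himg : ∀ x ∈ nnspan ((Submodule.span ℝ {a}).mkQ '' P),
        ∃ μ ∈ AddSubmonoid.closure P, (Submodule.span ℝ {a}).mkQ μ = x := by
      intro x hx
      have h1 := AddMonoidHom.map_mclosure (Submodule.span ℝ {a}).mkQ P
      have h2 : x ∈ AddSubmonoid.closure ((Submodule.span ℝ {a}).mkQ '' P) := hx
      rw [← h1] at h2
      exact h2
    rw [hb5] at hβ'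
    rcases hβ' with ⟨-, h⟩ | ⟨-, h⟩
    · left
      obtain ⟨μ, hμ, hμe⟩ := himg _ h
      intro i
      rw [hq β μ hμe.symm i]
      exact hnn μ hμ i
    · right
      obtain ⟨μ, hμ, hμe⟩ := himg _ h
      intro i
      obtain ⟨n, hn⟩ := hnn μ hμ i
      refine ⟨n, ?_⟩
      rw [← map_neg] at hμe
      have := hq _ _ hμe i
      rw [hn] at this
      simp at this
      linarith

theorem mk_ears {E : Type*} [AddCommGroup E] [Module ℝ E] {B' : LinearMap.BilinForm ℝ E}
    {R' : Set E} {κ : Type*} [Fintype κ] [Nonempty κ] {l n : ℕ} (hl : Fintype.card κ = l)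
    (f : κ → E) (g : Fin n → E)
    (hli : LinearIndependent ℝ (Sum.elim f g))
    (hspan : ⊤ ≤ Submodule.span ℝ (Set.range (Sum.elim f g)))
    (hcl : AddSubgroup.closure R' = AddSubgroup.closure (Set.range (Sum.elim f g)))
    (hg : ∀ j, B' (g j) = 0) (hsymm : ∀ u v, B' u v = B' v u) (hpsd : ∀ v, 0 ≤ B' v v)
    (hnull : ∀ v, B' v v = 0 → v ∈ Submodule.span ℝ (Set.range g))
    (hnoniso : ∀ α ∈ R', B' α α ≠ 0)
    (hint : ∀ α ∈ R', ∀ β ∈ R', ∃ m : ℤ, 2 * B' α β = (m : ℝ) * B' α α)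
    (hrefl : ∀ α ∈ R', ∀ β ∈ R', β - (2 * (B' α α)⁻¹ * B' α β) • α ∈ R')
    (hfR : ∀ k, f k ∈ R')
    (hconn : ∀ T : Set κ, T.Nonempty → T ≠ Set.univ → ∃ i ∈ T, ∃ j ∉ T, B' (f i) (f j) ≠ 0) :
    IsEARS B' R' l n := by
  let e := Module.Basis.mk hli hspan
  have hgs : Submodule.span ℝ (Set.range g) ≤ LinearMap.ker B' := by
    apply Submodule.span_le.2
    rintro _ ⟨j, rfl⟩
    exact hg j
  have hker : LinearMap.ker B' = Submodule.span ℝ (Set.range g) := by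
    apply le_antisymm _ hgs
    intro v hv
    apply hnull
    rw [LinearMap.mem_ker.1 hv]; simp
  have hligr : LinearIndependent ℝ g := by
    have := hli.comp Sum.inr Sum.inr_injective
    exact this
  have hliZ : LinearIndependent ℤ (Sum.elim f g) := 
    hli.restrict_scalars (by
      intro x y hxy
      simpa using hxy)
  have hsub : AddSubgroup.toIntSubmodule (zspan R') =
      Submodule.span ℤ (Set.range (Sum.elim f g)) := by
    rw [zspan, hcl]
    apply AddSubgroup.toIntSubmodule.symm.injective
    ext x
    simp [← Submodule.span_int_eq_addSubgroupClosure]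
  have bZ : Module.Basis (κ ⊕ Fin n) ℤ (AddSubgroup.toIntSubmodule (zspan R')) := by
    rw [hsub]
    exact Module.Basis.span hliZ
  have bZ' : Module.Basis (κ ⊕ Fin n) ℤ (zspan R') := bZ
  refine ⟨?_, Module.Basis.finiteDimensional_of_finite e, hsymm, hpsd, ?_, ?_, ?_, hnoniso, ?_,
    Module.Free.of_basis bZ', ?_, hint, ?_, ?_⟩
  · rw [← hl]; exact Fintype.card_pos
  · rw [Module.finrank_eq_card_basis e, Fintype.card_sum, hl, Fintype.card_fin]
  · ext v
    constructor
    · intro hv; exact hgs (hnull v hv)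
    · intro hv
      have : B' v = 0 := hv
      simp [nullSet, this]
  · rw [hker, finrank_span_eq_card hligr, Fintype.card_fin]
  · rw [eq_top_iff]
    refine hspan.trans (Submodule.span_le.2 ?_)
    intro x hx
    have h1 : x ∈ AddSubgroup.closure R' := by rw [hcl]; exact AddSubgroup.subset_closure hx
    have h2 : AddSubgroup.closure R' ≤ (Submodule.span ℝ R').toAddSubgroup :=
      (AddSubgroup.closure_le _).2 Submodule.subset_span
    exact h2 h1
  · rw [Module.finrank_eq_card_basis bZ', Fintype.card_sum, hl, Fintype.card_fin]
  · have hs : ∀ α ∈ R', ∀ β ∈ R', srefl B' α β ∈ R' := by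
      intro α hα β hβ
      simpa [srefl] using hrefl α hα β hβ
    intro α hα
    apply Set.Subset.antisymm
    · rintro _ ⟨β, hβ, rfl⟩
      exact hs α hα β hβ
    · intro β hβ
      refine ⟨srefl B' α β, hs α hα β hβ, ?_⟩
      have h0 := hnoniso α hα
      simp only [srefl, LinearMap.sub_apply, LinearMap.id_apply, LinearMap.smulRight_apply,
        LinearMap.smul_apply, map_sub, map_smul, smul_eq_mul]
      have : 2 * (B' α α)⁻¹ * B' α α = 2 := by field_simp
      rw [this]
      module
  · intro A hA hne hneq
    by_contra hcon
    push Not at hcon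
    have horth : ∀ y, (∀ k, B' (f k) y = 0) → B' y y = 0 := by
      intro y hy
      have h1 : ⊤ ≤ LinearMap.ker (B' y) := by
        refine hspan.trans (Submodule.span_le.2 ?_)
        rintro _ ⟨k | j, rfl⟩
        · simp only [Sum.elim_inl, SetLike.mem_coe, LinearMap.mem_ker]
          rw [hsymm, hy]
        · simp only [Sum.elim_inr, SetLike.mem_coe, LinearMap.mem_ker]
          rw [hsymm, hg]; simp
      exact h1 (Submodule.mem_top (x := y))
    obtain ⟨x, hx⟩ := hne
    obtain ⟨y, hy, hyA⟩ : ∃ y ∈ R', y ∉ A := by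
      by_contra hc
      push Not at hc
      exact hneq (Set.Subset.antisymm hA hc)
    by_cases hT1 : ({k | f k ∈ A} : Set κ).Nonempty
    · by_cases hT2 : ({k | f k ∈ A} : Set κ) = Set.univ
      · apply hnoniso y hy
        apply horth
        intro k
        have : k ∈ ({k | f k ∈ A} : Set κ) := by rw [hT2]; trivial
        exact hcon _ this y ⟨hy, hyA⟩
      · obtain ⟨i, hi, j, hj, hij⟩ := hconn _ hT1 hT2
        exact hij (hcon _ hi _ ⟨hfR j, hj⟩)
    · apply hnoniso x (hA hx)
      apply horth
      intro k
      rw [hsymm]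
      exact hcon x hx _ ⟨hfR k, fun hk => hT1 ⟨k, hk⟩⟩

theorem facts {V : Type*} [AddCommGroup V] [Module ℝ V]
    {B : LinearMap.BilinForm ℝ V} {R : Set V} {l : ℕ}
    (hE : IsEARS B R l 2) (hred : IsReducedRS R)
    {P : Set V} {a : V} (hfs : IsFundamentalSet B R l P a)
    {S : Set V} (hSP : S ⊆ P) (hSne : S.Nonempty) (hSproper : S ≠ P) :
    a ≠ 0 ∧ B a = 0 ∧ S.Finite ∧
    LinearIndependent ℝ
      (Submodule.Quotient.mk ∘ ((↑) : S → V) : S → V ⧸ Submodule.span ℝ {a}) ∧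
    (∀ v ∈ Submodule.span ℝ (insert a S), B v v = 0 → v ∈ Submodule.span ℝ {a}) ∧
    (∀ α ∈ R, ∀ β ∈ R, β - (2 * (B α α)⁻¹ * B α β) • α ∈ R) ∧
    ∃ k : ℕ, 0 < k ∧
      (k : ℤ) • a ∈ AddSubgroup.closure (R ∩ (Submodule.span ℝ (insert a S) : Set V)) ∧
      ∀ β ∈ R ∩ (Submodule.span ℝ (insert a S) : Set V), ∃ μ ∈ AddSubmonoid.closure S, ∃ m : ℤ,
        β = μ + (m * (k : ℤ)) • a ∨ β = -μ + (m * (k : ℤ)) • a := by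
  have hPf : P.Finite := hfs.2.2.2.2.1
  have hPR : P ⊆ R := hfs.2.2.2.1
  have : Fintype P := hPf.fintype
  obtain ⟨e, hea, hep, hliQ, h⟩ := build_core hE hred hfs
  have hline := lattice_line hE hfs
  have ha0 : a ≠ 0 := by rw [← hea]; exact e.ne_zero _
  set W := Submodule.span ℝ (insert a S) with hW
  have hSW : S ⊆ W := fun x hx => Submodule.subset_span (Set.mem_insert_of_mem _ hx)
  have haW : a ∈ W := Submodule.subset_span (Set.mem_insert _ _)
  have hWz : ∀ v ∈ W, ∀ p : P, (p : V) ∉ S → e.repr v (Sum.inr p) = 0 := by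
    intro v hv p hp
    have hle : W ≤ LinearMap.ker (e.coord (Sum.inr p)) := by
      apply Submodule.span_le.2
      intro x hx
      rcases hx with rfl | hx
      · simp only [SetLike.mem_coe, LinearMap.mem_ker, Module.Basis.coord_apply]
        rw [← hea]; simp
      · simp only [SetLike.mem_coe, LinearMap.mem_ker, Module.Basis.coord_apply]
        have : x = e (Sum.inr ⟨x, hSP hx⟩) := by rw [hep]
        rw [this, Module.Basis.repr_self, Core.single_ne]
        rintro rfl
        exact hp hx
    simpa using hle hv
  obtain ⟨p₀, hp₀, hp₀S⟩ : ∃ p ∈ P, p ∉ S := by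
    by_contra hc
    push Not at hc
    exact hSproper (Set.Subset.antisymm hSP hc)
  refine ⟨ha0, by rw [← hea]; exact h.ha, hPf.subset hSP, ?_, ?_, h.refl, ?_⟩
  · have := hliQ.comp (fun s : S => (⟨s, hSP s.2⟩ : P)) (fun x y hxy => by
      have := congrArg Subtype.val hxy
      exact Subtype.ext this)
    exact this
  · intro v hv hvv
    have hz := h.pd v hvv ⟨p₀, hp₀⟩ (hWz v hv _ hp₀S)
    rw [Submodule.mem_span_singleton]
    refine ⟨e.repr v (Sum.inl ()), ?_⟩
    conv_rhs => rw [Core.expand e v]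
    rw [Finset.sum_eq_zero (fun i _ => by rw [hz i, zero_smul]), hea, add_zero]
  · set L := AddSubgroup.closure (R ∩ (W : Set V)) with hL
    have hLR : L ≤ zspan R := AddSubgroup.closure_mono Set.inter_subset_left
    have hSL : ∀ x ∈ S, x ∈ L := fun x hx =>
      AddSubgroup.subset_closure ⟨hPR (hSP hx), hSW hx⟩
    have hML : ∀ μ ∈ AddSubmonoid.closure S, μ ∈ L := by
      intro μ hμ
      have : AddSubmonoid.closure S ≤ L.toAddSubmonoid := (AddSubmonoid.closure_le).2 hSL
      exact this hμ
    obtain ⟨g, hg⟩ := Int.subgroup_cyclic (L.comap (zmultiplesHom V a))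
    have hgm : ∀ z : ℤ, z • a ∈ L ↔ ∃ m : ℤ, z = m * (g.natAbs : ℤ) := by
      intro z
      have : z • a ∈ L ↔ z ∈ L.comap (zmultiplesHom V a) := by simp
      rw [this, hg, AddSubgroup.mem_closure_singleton]
      constructor
      · rintro ⟨m, rfl⟩
        rcases Int.natAbs_eq g with h | h
        · exact ⟨m, by rw [smul_eq_mul, ← h]⟩
        · refine ⟨-m, ?_⟩
          rw [smul_eq_mul]; nth_rewrite 1 [h]; ring
      · rintro ⟨m, rfl⟩
        rcases Int.natAbs_eq g with h | h
        · exact ⟨m, by rw [smul_eq_mul, ← h]⟩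
        · refine ⟨-m, ?_⟩
          rw [smul_eq_mul]; nth_rewrite 1 [h]; ring
    have hline' : ∀ c : ℝ, c • a ∈ L → ∃ m : ℤ, c = ((m * (g.natAbs : ℤ) : ℤ) : ℝ) := by
      intro c hc
      obtain ⟨z, hz⟩ := hline c (hLR hc)
      rw [hz, Int.cast_smul_eq_zsmul] at hc
      obtain ⟨m, hm⟩ := (hgm z).1 hc
      exact ⟨m, by rw [hz, hm]⟩
    refine ⟨g.natAbs, ?_, (hgm _).2 ⟨1, by simp⟩, ?_⟩
    · obtain ⟨s, hs⟩ := hSne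
      obtain ⟨c, hc, hsc⟩ := h.translate (hPR (hSP hs))
      rw [hea] at hsc
      have h1 : s + c • a ∈ L := AddSubgroup.subset_closure
        ⟨hsc, W.add_mem (hSW hs) (W.smul_mem _ haW)⟩
      have h2 : c • a ∈ L := by
        have := L.sub_mem h1 (hSL s hs)
        simpa using this
      obtain ⟨m, hm⟩ := hline' c h2
      rcases Nat.eq_zero_or_pos g.natAbs with h0 | h0
      · rw [h0] at hm; simp at hm; exact absurd hm hc
      · exact h0
    · have hsum : ∀ n : P → ℕ, (∀ p : P, (p : V) ∉ S → n p = 0) →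
          ∑ p, n p • (p : V) ∈ AddSubmonoid.closure S := by
        intro n hn
        refine AddSubmonoid.sum_mem _ fun p _ => ?_
        by_cases hp : (p : V) ∈ S
        · exact AddSubmonoid.nsmul_mem _ (AddSubmonoid.subset_closure hp) _
        · rw [hn p hp, zero_smul]; exact AddSubmonoid.zero_mem _
      rintro β ⟨hβR, hβW⟩
      have hβL : β ∈ L := AddSubgroup.subset_closure ⟨hβR, hβW⟩
      have hex := Core.expand e β
      rw [hea] at hex
      rcases h.sign β hβR with hs | hs
      · choose n hn using hs
        have hμ := hsum n (fun p hp => by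
          have := hWz β hβW p hp
          rw [hn] at this
          exact_mod_cast this)
        have heq : ∑ p, n p • (p : V) = ∑ p, e.repr β (Sum.inr p) • e (Sum.inr p) :=
          Finset.sum_congr rfl fun p _ => by rw [hn, hep, Nat.cast_smul_eq_nsmul]
        rw [← heq] at hex
        obtain ⟨m, hm⟩ := hline' (e.repr β (Sum.inl ())) (by
          have := L.sub_mem hβL (hML _ hμ)
          nth_rewrite 1 [hex] at this
          simpa using this)
        refine ⟨_, hμ, m, Or.inl ?_⟩
        rw [← Int.cast_smul_eq_zsmul ℝ, ← hm, add_comm]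
        exact hex
      · choose n hn using hs
        have hμ := hsum n (fun p hp => by
          have := hWz β hβW p hp
          rw [hn] at this
          have : (n p : ℝ) = 0 := by linarith
          exact_mod_cast this)
        have heq : -∑ p, n p • (p : V) = ∑ p, e.repr β (Sum.inr p) • e (Sum.inr p) := by
          rw [← Finset.sum_neg_distrib]
          exact Finset.sum_congr rfl fun p _ => by
            rw [hn, hep, neg_smul, Nat.cast_smul_eq_nsmul]
        rw [← heq] at hex
        obtain ⟨m, hm⟩ := hline' (e.repr β (Sum.inl ())) (by
          have := L.add_mem hβL (hML _ hμ)
          nth_rewrite 1 [hex] at this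
          simpa using this)
        refine ⟨_, hμ, m, Or.inr ?_⟩
        rw [← Int.cast_smul_eq_zsmul ℝ, ← hm, add_comm]
        exact hex

theorem mem_closure_sub {V : Type*} [AddCommGroup V] [Module ℝ V] (W : Submodule ℝ V)
    (T : Set W) (x : W) (hx : (x : V) ∈ AddSubgroup.closure (((↑) : W → V) '' T)) :
    x ∈ AddSubgroup.closure T := by
  have h := AddMonoidHom.map_closure (W.subtype : W →+ V) T
  have h1 : (x : V) ∈ (AddSubgroup.closure T).map (W.subtype : W →+ V) := by
    rw [h]; exact hx
  obtain ⟨y, hy, hyx⟩ := h1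
  have : y = x := Subtype.ext hyx
  rw [← this]; exact hy

theorem mem_mclosure_sub {V : Type*} [AddCommGroup V] [Module ℝ V] (W : Submodule ℝ V)
    (T : Set W) (x : W) (hx : (x : V) ∈ AddSubmonoid.closure (((↑) : W → V) '' T)) :
    x ∈ AddSubmonoid.closure T := by
  have h := AddMonoidHom.map_mclosure (W.subtype : W →+ V) T
  have h1 : (x : V) ∈ (AddSubmonoid.closure T).map (W.subtype : W →+ V) := by
    rw [h]; exact hx
  obtain ⟨y, hy, hyx⟩ := h1
  have : y = x := Subtype.ext hyx
  rw [← this]; exact hy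

theorem mem_span_sub {V : Type*} [AddCommGroup V] [Module ℝ V] (W : Submodule ℝ V)
    (T : Set W) (x : W) (hx : (x : V) ∈ Submodule.span ℝ (((↑) : W → V) '' T)) :
    x ∈ Submodule.span ℝ T := by
  have h := Submodule.map_span W.subtype T
  have h1 : (x : V) ∈ (Submodule.span ℝ T).map W.subtype := by
    rw [h]; exact hx
  obtain ⟨y, hy, hyx⟩ := h1
  have : y = x := Subtype.ext hyx
  rw [← this]; exact hy

theorem mclosure_le_closure {V : Type*} [AddCommGroup V] {S : Set V} {μ : V}
    (hμ : μ ∈ AddSubmonoid.closure S) : μ ∈ AddSubgroup.closure S := by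
  have : AddSubmonoid.closure S ≤ (AddSubgroup.closure S).toAddSubmonoid :=
    (AddSubmonoid.closure_le).2 AddSubgroup.subset_closure
  exact this hμ

theorem closure_le_span {V : Type*} [AddCommGroup V] [Module ℝ V] {S : Set V} {μ : V}
    (hμ : μ ∈ AddSubgroup.closure S) : μ ∈ Submodule.span ℝ S := by
  have : AddSubgroup.closure S ≤ (Submodule.span ℝ S).toAddSubgroup :=
    (AddSubgroup.closure_le _).2 Submodule.subset_span
  exact this hμ

theorem conn_sub {V : Type*} [AddCommGroup V] [Module ℝ V]
    {B : LinearMap.BilinForm ℝ V} {S : Set V}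
    (hScon : ∀ S' ⊆ S, S'.Nonempty → S' ≠ S → ∃ x ∈ S', ∃ y ∈ S \ S', B x y ≠ 0)
    (T : Set S) (hT : T.Nonempty) (hT' : T ≠ Set.univ) :
    ∃ i ∈ T, ∃ j ∉ T, B (i : V) (j : V) ≠ 0 := by
  obtain ⟨x, ⟨i, hi, rfl⟩, y, ⟨hy, hy'⟩, hxy⟩ := hScon (((↑) : S → V) '' T)
    (by rintro _ ⟨s, -, rfl⟩; exact s.2) (hT.image _) (by
      intro heq
      apply hT'
      ext s
      refine ⟨fun _ => trivial, fun _ => ?_⟩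
      have : (s : V) ∈ ((↑) : S → V) '' T := by rw [heq]; exact s.2
      obtain ⟨t, ht, hts⟩ := this
      have : t = s := Subtype.ext hts
      rw [← this]; exact ht)
  exact ⟨i, hi, ⟨y, hy⟩, fun h => hy' ⟨_, h, rfl⟩, hxy⟩

theorem part_one {V : Type*} [AddCommGroup V] [Module ℝ V]
    {B : LinearMap.BilinForm ℝ V} {R : Set V} {l : ℕ}
    (hE : IsEARS B R l 2) (hred : IsReducedRS R)
    {P : Set V} {a : V} (hfs : IsFundamentalSet B R l P a)
    {S : Set V} (hSP : S ⊆ P) (hSne : S.Nonempty) (hSproper : S ≠ P)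
    (hScon : ∀ S' ⊆ S, S'.Nonempty → S' ≠ S → ∃ x ∈ S', ∃ y ∈ S \ S', B x y ≠ 0) :
    IsEARS (LinearMap.BilinForm.restrict B (Submodule.span ℝ (insert a S)))
        {x : (Submodule.span ℝ (insert a S)) | (x : V) ∈ R} S.ncard 1 ∧
      IsReducedRS {x : (Submodule.span ℝ (insert a S)) | (x : V) ∈ R} := by
  have hPR : P ⊆ R := hfs.2.2.2.1
  obtain ⟨ha0, hBa, hSf, hliQ, hnull, hrefl, k, hk, hka, hroot⟩ :=
    facts hE hred hfs hSP hSne hSproper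
  have : Fintype S := hSf.fintype
  have : Nonempty S := hSne.to_subtype
  set W := Submodule.span ℝ (insert a S) with hW
  have hSW : S ⊆ W := fun x hx => Submodule.subset_span (Set.mem_insert_of_mem _ hx)
  have haW : a ∈ W := Submodule.subset_span (Set.mem_insert _ _)
  have hka0 : (k : ℤ) • a ≠ 0 := by
    rw [← Int.cast_smul_eq_zsmul ℝ]
    simp [ha0, hk.ne']
  constructor
  · let f : S → W := fun s => ⟨s, hSW s.2⟩
    let g : Fin 1 → W := fun _ => ⟨(k : ℤ) • a, W.toAddSubgroup.zsmul_mem haW _⟩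
    have hSI : S ⊆ ((↑) : W → V) '' Set.range (Sum.elim f g) := fun s hs =>
      ⟨f ⟨s, hs⟩, ⟨Sum.inl ⟨s, hs⟩, rfl⟩, rfl⟩
    have hkI : (k : ℤ) • a ∈ ((↑) : W → V) '' Set.range (Sum.elim f g) :=
      ⟨g 0, ⟨Sum.inr 0, rfl⟩, rfl⟩
    refine mk_ears (κ := S) ?_ f g ?_ ?_ ?_ ?_ ?_ ?_ ?_ ?_ ?_ ?_ ?_ ?_
    · rw [← Nat.card_coe_set_eq, Nat.card_eq_fintype_card]
    · apply LinearIndependent.of_comp W.subtype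
      have hliA : LinearIndependent ℝ
          (fun _ : Fin 1 => (⟨(k : ℤ) • a, (Submodule.span ℝ {a}).toAddSubgroup.zsmul_mem
            (Submodule.mem_span_singleton_self a) _⟩ : Submodule.span ℝ {a})) := by
        apply LinearIndependent.of_subsingleton 0
        intro h
        exact hka0 (congrArg Subtype.val h)
      have h1 := hliA.sumElim_of_quotient _ hliQ
      have h2 := h1.comp (Equiv.sumComm S (Fin 1)) (Equiv.injective _)
      have h3 : W.subtype ∘ Sum.elim f g = Sum.elim (fun _ : Fin 1 => (k : ℤ) • a)
          ((↑) : S → V) ∘ Equiv.sumComm S (Fin 1) := by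
        funext x
        rcases x with x | x <;> rfl
      rw [h3]
      exact h2
    · intro x _
      apply mem_span_sub
      have hx : (x : V) ∈ Submodule.span ℝ (insert a S) := x.2
      revert hx
      generalize (x : V) = y
      intro hy
      refine Submodule.span_le.2 ?_ hy
      intro z hz
      rcases hz with rfl | hz
      · have h1 := Submodule.smul_mem _ ((k : ℝ)⁻¹) (Submodule.subset_span (R := ℝ) hkI)
        rw [← Int.cast_smul_eq_zsmul ℝ, smul_smul] at h1
        have : (k : ℝ) ≠ 0 := by exact_mod_cast hk.ne'
        simpa [this] using h1
      · exact Submodule.subset_span (hSI hz)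
    · apply le_antisymm
      · apply (AddSubgroup.closure_le _).2
        intro x hx
        apply mem_closure_sub
        obtain ⟨μ, hμ, m, hm⟩ := hroot x ⟨hx, x.2⟩
        have hμ' := AddSubgroup.closure_mono hSI (mclosure_le_closure hμ)
        have hk' := AddSubgroup.zsmul_mem _ (AddSubgroup.subset_closure hkI) m
        rw [smul_smul] at hk'
        rcases hm with hm | hm
        · rw [hm]; exact AddSubgroup.add_mem _ hμ' hk'
        · rw [hm]; exact AddSubgroup.add_mem _ (AddSubgroup.neg_mem _ hμ') hk'
      · apply (AddSubgroup.closure_le _).2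
        rintro _ ⟨s | j, rfl⟩
        · exact AddSubgroup.subset_closure (hPR (hSP s.2))
        · apply mem_closure_sub
          refine AddSubgroup.closure_mono ?_ hka
          rintro z ⟨hz, hz'⟩
          exact ⟨⟨z, hz'⟩, hz, rfl⟩
    · intro j
      ext x
      change B ((k : ℤ) • a) (x : V) = 0
      simp [hBa]
    · intro u v; exact hE.symm _ _
    · intro v; exact hE.posSemidef _
    · intro v hv
      have h1 := hnull v v.2 hv
      apply mem_span_sub
      rw [Submodule.mem_span_singleton] at h1
      obtain ⟨t, ht⟩ := h1
      have h2 : (k : ℤ) • a ∈ ((↑) : W → V) '' Set.range g := ⟨g 0, ⟨0, rfl⟩, rfl⟩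
      have h3 := Submodule.smul_mem _ (t * (k : ℝ)⁻¹) (Submodule.subset_span (R := ℝ) h2)
      rw [← Int.cast_smul_eq_zsmul ℝ, smul_smul] at h3
      have : (k : ℝ) ≠ 0 := by exact_mod_cast hk.ne'
      rw [← ht]
      simpa [this] using h3
    · intro α hα; exact hE.root_nonisotropic _ hα
    · intro α hα β hβ; exact hE.integral _ hα _ hβ
    · intro α hα β hβ; exact hrefl _ hα _ hβ
    · intro s; exact hPR (hSP s.2)
    · intro T hT hT'; exact conn_sub hScon T hT hT'
  · intro α hα h2
    exact hred _ hα h2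

theorem part_two {V : Type*} [AddCommGroup V] [Module ℝ V]
    {B : LinearMap.BilinForm ℝ V} {R : Set V} {l : ℕ}
    (hE : IsEARS B R l 2) (hred : IsReducedRS R)
    {P : Set V} {a : V} (hfs : IsFundamentalSet B R l P a)
    {S : Set V} (hSP : S ⊆ P) (hSne : S.Nonempty) (hSproper : S ≠ P)
    (hScon : ∀ S' ⊆ S, S'.Nonempty → S' ≠ S → ∃ x ∈ S', ∃ y ∈ S \ S', B x y ≠ 0)
    (BQ : LinearMap.BilinForm ℝ (V ⧸ Submodule.span ℝ {a}))
    (hBQ : ∀ x y, BQ ((Submodule.span ℝ {a}).mkQ x) ((Submodule.span ℝ {a}).mkQ y) = B x y) :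
    IsEARS
        (LinearMap.BilinForm.restrict BQ
          (Submodule.span ℝ ((Submodule.span ℝ {a}).mkQ ''
            (R ∩ (Submodule.span ℝ (insert a S) : Set V)))))
        {x : (Submodule.span ℝ ((Submodule.span ℝ {a}).mkQ ''
            (R ∩ (Submodule.span ℝ (insert a S) : Set V)))) |
          (x : V ⧸ Submodule.span ℝ {a}) ∈ (Submodule.span ℝ {a}).mkQ ''
            (R ∩ (Submodule.span ℝ (insert a S) : Set V))} S.ncard 0 ∧
      IsBaseSet
        {x : (Submodule.span ℝ ((Submodule.span ℝ {a}).mkQ ''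
            (R ∩ (Submodule.span ℝ (insert a S) : Set V)))) |
          (x : V ⧸ Submodule.span ℝ {a}) ∈ (Submodule.span ℝ {a}).mkQ ''
            (R ∩ (Submodule.span ℝ (insert a S) : Set V))}
        {x : (Submodule.span ℝ ((Submodule.span ℝ {a}).mkQ ''
            (R ∩ (Submodule.span ℝ (insert a S) : Set V)))) |
          (x : V ⧸ Submodule.span ℝ {a}) ∈ (Submodule.span ℝ {a}).mkQ '' S}
        S.ncard := by
  have hPR : P ⊆ R := hfs.2.2.2.1
  obtain ⟨ha0, hBa, hSf, hliQ, hnull, hrefl, k, hk, hka, hroot⟩ :=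
    facts hE hred hfs hSP hSne hSproper
  have : Fintype S := hSf.fintype
  have : Nonempty S := hSne.to_subtype
  set W := Submodule.span ℝ (insert a S) with hW
  set q := (Submodule.span ℝ {a}).mkQ with hq
  set U := Submodule.span ℝ (q '' (R ∩ (W : Set V))) with hU
  have hSW : S ⊆ W := fun x hx => Submodule.subset_span (Set.mem_insert_of_mem _ hx)
  have hqa : q a = 0 := by
    rw [hq, Submodule.mkQ_apply, Submodule.Quotient.mk_eq_zero]
    exact Submodule.mem_span_singleton_self a
  have hqS : ∀ s ∈ S, q s ∈ U := fun s hs =>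
    Submodule.subset_span ⟨s, ⟨hPR (hSP hs), hSW hs⟩, rfl⟩
  have hqroot : ∀ β ∈ R ∩ (W : Set V), ∃ x ∈ AddSubmonoid.closure (q '' S),
      q β = x ∨ q β = -x := by
    intro β hβ
    obtain ⟨μ, hμ, m, hm⟩ := hroot β hβ
    refine ⟨q μ, ?_, ?_⟩
    · have h1 := AddMonoidHom.map_mclosure q S
      rw [← h1]
      exact ⟨μ, hμ, rfl⟩
    · rcases hm with hm | hm
      · left; rw [hm, map_add, map_zsmul, hqa]; simp
      · right; rw [hm, map_add, map_zsmul, hqa]; simp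
  have hqcl : ∀ β ∈ R ∩ (W : Set V), q β ∈ AddSubgroup.closure (q '' S) := by
    intro β hβ
    obtain ⟨x, hx, h | h⟩ := hqroot β hβ
    · rw [h]; exact mclosure_le_closure hx
    · rw [h]; exact AddSubgroup.neg_mem _ (mclosure_le_closure hx)
  have hUW : ∀ x ∈ U, ∃ v ∈ W, q v = x := by
    intro x hx
    have h1 : U ≤ W.map q := by
      apply Submodule.span_le.2
      rintro _ ⟨β, hβ, rfl⟩
      exact ⟨β, hβ.2, rfl⟩
    exact h1 hx
  let f : S → U := fun s => ⟨q s, hqS s s.2⟩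
  have hlif : LinearIndependent ℝ f := by
    apply LinearIndependent.of_comp U.subtype
    exact hliQ
  have hP0 : {x : U | (x : V ⧸ Submodule.span ℝ {a}) ∈ q '' S} = Set.range f := by
    ext x
    constructor
    · rintro ⟨s, hs, hsx⟩
      exact ⟨⟨s, hs⟩, Subtype.ext hsx⟩
    · rintro ⟨s, rfl⟩
      exact ⟨s, s.2, rfl⟩
  have hcf : q '' S = ((↑) : U → V ⧸ Submodule.span ℝ {a}) '' Set.range f := by
    ext x
    constructor
    · rintro ⟨s, hs, rfl⟩
      exact ⟨f ⟨s, hs⟩, ⟨⟨s, hs⟩, rfl⟩, rfl⟩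
    · rintro ⟨_, ⟨s, rfl⟩, rfl⟩
      exact ⟨s, s.2, rfl⟩
  have hcard : Fintype.card S = S.ncard := by
    rw [← Nat.card_coe_set_eq, Nat.card_eq_fintype_card]
  have hfR : ∀ s, f s ∈ {x : U | (x : V ⧸ Submodule.span ℝ {a}) ∈ q '' (R ∩ (W : Set V))} :=
    fun s => ⟨s, ⟨hPR (hSP s.2), hSW s.2⟩, rfl⟩
  constructor
  · let g : Fin 0 → U := fun j => j.elim0
    have hrange : Set.range (Sum.elim f g) = Set.range f := by
      rw [Set.Sum.elim_range, Set.range_eq_empty g, Set.union_empty]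
    refine mk_ears (κ := S) hcard f g ?_ ?_ ?_ ?_ ?_ ?_ ?_ ?_ ?_ ?_ hfR ?_
    · have h2 := hlif.comp (Equiv.sumEmpty S (Fin 0)) (Equiv.injective _)
      have h3 : Sum.elim f g = f ∘ Equiv.sumEmpty S (Fin 0) := by
        funext x
        rcases x with x | x
        · rfl
        · exact x.elim0
      rw [h3]
      exact h2
    · intro x _
      rw [hrange]
      apply mem_span_sub
      rw [← hcf]
      have h1 : U ≤ Submodule.span ℝ (q '' S) := by
        apply Submodule.span_le.2
        rintro _ ⟨β, hβ, rfl⟩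
        exact closure_le_span (hqcl β hβ)
      exact h1 x.2
    · rw [hrange]
      apply le_antisymm
      · apply (AddSubgroup.closure_le _).2
        rintro x ⟨β, hβ, hβx⟩
        apply mem_closure_sub
        rw [← hcf, ← hβx]
        exact hqcl β hβ
      · apply AddSubgroup.closure_mono
        rintro _ ⟨s, rfl⟩
        exact hfR s
    · intro j; exact j.elim0
    · intro u v
      obtain ⟨u', -, hu⟩ := hUW u u.2
      obtain ⟨v', -, hv⟩ := hUW v v.2
      change BQ (u : V ⧸ Submodule.span ℝ {a}) v = BQ (v : V ⧸ Submodule.span ℝ {a}) u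
      rw [← hu, ← hv, hBQ, hBQ, hE.symm]
    · intro v
      obtain ⟨v', -, hv⟩ := hUW v v.2
      change 0 ≤ BQ (v : V ⧸ Submodule.span ℝ {a}) v
      rw [← hv, hBQ]
      exact hE.posSemidef _
    · intro v hv0
      obtain ⟨v', hv', hv⟩ := hUW v v.2
      change BQ (v : V ⧸ Submodule.span ℝ {a}) v = 0 at hv0
      rw [← hv, hBQ] at hv0
      have h1 := hnull v' hv' hv0
      have h2 : v = 0 := by
        apply Subtype.ext
        rw [← hv, hq, Submodule.mkQ_apply]
        exact (Submodule.Quotient.mk_eq_zero _).2 h1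
      rw [h2]; exact Submodule.zero_mem _
    · rintro α ⟨α', hα', hα⟩
      change BQ (α : V ⧸ Submodule.span ℝ {a}) α ≠ 0
      rw [← hα, hBQ]
      exact hE.root_nonisotropic _ hα'.1
    · rintro α ⟨α', hα', hα⟩ β ⟨β', hβ', hβ⟩
      change ∃ m : ℤ, 2 * BQ (α : V ⧸ Submodule.span ℝ {a}) β = m * BQ (α : V ⧸ Submodule.span ℝ {a}) α
      rw [← hα, ← hβ, hBQ, hBQ]
      exact hE.integral _ hα'.1 _ hβ'.1
    · rintro α ⟨α', hα', hα⟩ β ⟨β', hβ', hβ⟩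
      refine ⟨β' - (2 * (B α' α')⁻¹ * B α' β') • α', ⟨hrefl _ hα'.1 _ hβ'.1,
        W.sub_mem hβ'.2 (W.smul_mem _ hα'.2)⟩, ?_⟩
      change _ = (β : V ⧸ Submodule.span ℝ {a}) -
        (2 * (BQ (α : V ⧸ Submodule.span ℝ {a}) α)⁻¹ * BQ (α : V ⧸ Submodule.span ℝ {a}) β) • (α : V ⧸ Submodule.span ℝ {a})
      rw [← hα, ← hβ, hBQ, hBQ, map_sub, map_smul]
    · intro T hT hT'
      obtain ⟨i, hi, j, hj, hij⟩ := conn_sub hScon T hT hT'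
      refine ⟨i, hi, j, hj, ?_⟩
      change BQ (q i) (q j) ≠ 0
      rw [hBQ]; exact hij
  · rw [hP0]
    refine ⟨?_, Set.finite_range f, ?_, hlif.linearIndepOn_id, ?_⟩
    · rintro _ ⟨s, rfl⟩; exact hfR s
    · rw [← Nat.card_coe_set_eq, Nat.card_range_of_injective hlif.injective, Nat.card_coe_set_eq]
    · rw [← Set.inter_union_distrib_left]
      symm
      apply Set.inter_eq_left.2
      rintro x ⟨β, hβ, hβx⟩
      obtain ⟨y, hy, h | h⟩ := hqroot β hβ
      · left
        apply mem_mclosure_sub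
        rw [← hcf, ← hβx, h]; exact hy
      · right
        change -x ∈ AddSubmonoid.closure (Set.range f)
        apply mem_mclosure_sub
        rw [← hcf, Submodule.coe_neg, ← hβx, h, neg_neg]; exact hy

theorem part_three {V : Type*} [AddCommGroup V] [Module ℝ V]
    {B : LinearMap.BilinForm ℝ V} {R : Set V} {l : ℕ}
    (hE : IsEARS B R l 2) (hred : IsReducedRS R)
    {P : Set V} {a : V} (hfs : IsFundamentalSet B R l P a)
    {S : Set V} (hSP : S ⊆ P) (hSne : S.Nonempty) (hSproper : S ≠ P) :
    ∃ kS : ℕ, 0 < kS ∧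
      (zspan (R ∩ (Submodule.span ℝ (insert a S) : Set V)) : Set V)
        = {v | ∃ μ ∈ AddSubgroup.closure S, ∃ m : ℤ, v = μ + (m * kS) • a} ∧
      (∀ μ ∈ AddSubgroup.closure S, ∀ m : ℤ,
        μ + ((m * kS : ℤ)) • a = 0 → μ = 0 ∧ m = 0) := by
  have hPR : P ⊆ R := hfs.2.2.2.1
  obtain ⟨ha0, hBa, hSf, hliQ, hnull, hrefl, k, hk, hka, hroot⟩ :=
    facts hE hred hfs hSP hSne hSproper
  have : Fintype S := hSf.fintype
  refine ⟨k, hk, ?_, ?_⟩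
  · ext v
    constructor
    · intro hv
      have hv' : v ∈ AddSubgroup.closure (R ∩ (Submodule.span ℝ (insert a S) : Set V)) := hv
      induction hv' using AddSubgroup.closure_induction with
      | mem x hx =>
        obtain ⟨μ, hμ, m, hm | hm⟩ := hroot x hx
        · exact ⟨μ, mclosure_le_closure hμ, m, hm⟩
        · exact ⟨-μ, AddSubgroup.neg_mem _ (mclosure_le_closure hμ), m, hm⟩
      | zero => exact ⟨0, AddSubgroup.zero_mem _, 0, by simp⟩
      | add x y hx hy ihx ihy =>
        obtain ⟨μ, hμ, m, hm⟩ := ihx hx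
        obtain ⟨ν, hν, n, hn⟩ := ihy hy
        exact ⟨μ + ν, AddSubgroup.add_mem _ hμ hν, m + n, by rw [hm, hn]; module⟩
      | neg x hx ih =>
        obtain ⟨μ, hμ, m, hm⟩ := ih hx
        exact ⟨-μ, AddSubgroup.neg_mem _ hμ, -m, by rw [hm]; module⟩
    · rintro ⟨μ, hμ, m, rfl⟩
      refine AddSubgroup.add_mem _ (AddSubgroup.closure_mono ?_ hμ) ?_
      · exact fun s hs => ⟨hPR (hSP hs), Submodule.subset_span (Set.mem_insert_of_mem _ hs)⟩
      · rw [mul_smul]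
        exact AddSubgroup.zsmul_mem _ hka _
  · intro μ hμ m hm
    have hμa : μ ∈ Submodule.span ℝ {a} := by
      rw [add_eq_zero_iff_eq_neg] at hm
      rw [hm]
      exact (Submodule.span ℝ {a}).neg_mem ((Submodule.span ℝ {a}).toAddSubgroup.zsmul_mem
        (Submodule.mem_span_singleton_self a) _)
    have hμ0 : μ = 0 := by
      have h1 := closure_le_span hμ
      have h2 : S = Set.range ((↑) : S → V) := by simp
      rw [h2, Submodule.mem_span_range_iff_exists_fun] at h1
      obtain ⟨c, hc⟩ := h1
      have h3 : ∑ s, c s • (Submodule.Quotient.mk ∘ ((↑) : S → V) :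
          S → V ⧸ Submodule.span ℝ {a}) s = 0 := by
        rw [← (Submodule.Quotient.mk_eq_zero _).2 hμa, ← hc, ← Submodule.mkQ_apply, map_sum]
        exact Finset.sum_congr rfl fun s _ => by simp
      have h4 := Fintype.linearIndependent_iff.1 hliQ c h3
      rw [← hc]
      exact Finset.sum_eq_zero fun s _ => by rw [h4 s, zero_smul]
    refine ⟨hμ0, ?_⟩
    rw [hμ0, zero_add, ← Int.cast_smul_eq_zsmul ℝ] at hm
    have := (smul_eq_zero.1 hm).resolve_right ha0
    have h5 : m * (k : ℤ) = 0 := by exact_mod_cast this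
    exact (mul_eq_zero.1 h5).resolve_right (by exact_mod_cast hk.ne')

/-- For a nonempty proper connected subset `S ⊆ Π` of a fundamental-set
of a reduced elliptic root system: `(R^S, V^S)` is a reduced affine root system,
`π_a(R^S)` is an irreducible finite root system with base `π_a(S)`, and
`ℤR^S = ℤS ⊕ ℤ k_S a` for some positive integer `k_S`. -/
theorem stmt7 {V : Type*} [AddCommGroup V] [Module ℝ V]
    (B : LinearMap.BilinForm ℝ V) (R : Set V) (l : ℕ)
    (hE : IsEARS B R l 2) (hred : IsReducedRS R)
    (P : Set V) (a : V) (hfs : IsFundamentalSet B R l P a)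
    (S : Set V) (hSP : S ⊆ P) (hSne : S.Nonempty) (hSproper : S ≠ P)
    (hScon : ∀ S' ⊆ S, S'.Nonempty → S' ≠ S → ∃ x ∈ S', ∃ y ∈ S \ S', B x y ≠ 0) :
    -- `(R^S, V^S)` is a reduced affine root system (of rank `|S|`)
    (IsEARS (LinearMap.BilinForm.restrict B (Submodule.span ℝ (insert a S)))
        {x : (Submodule.span ℝ (insert a S)) | (x : V) ∈ R} S.ncard 1 ∧
      IsReducedRS {x : (Submodule.span ℝ (insert a S)) | (x : V) ∈ R}) ∧
    -- `π_a(R^S)` is an irreducible finite root system in `V/ℝa` with base `π_a(S)`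
    (IsEARS
        (LinearMap.BilinForm.restrict
          (quotFormBy B (Submodule.span ℝ {a})
            (fun w hw => by
              obtain ⟨c, rfl⟩ := Submodule.mem_span_singleton.mp hw
              have haa : a ∈ nullSet B := hfs.2.1
              rw [hE.null_eq] at haa
              ext v
              simp [LinearMap.mem_ker.mp haa])
            hE.symm)
          (Submodule.span ℝ ((Submodule.span ℝ {a}).mkQ ''
            (R ∩ (Submodule.span ℝ (insert a S) : Set V)))))
        {x : (Submodule.span ℝ ((Submodule.span ℝ {a}).mkQ ''
            (R ∩ (Submodule.span ℝ (insert a S) : Set V)))) |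
          (x : V ⧸ Submodule.span ℝ {a}) ∈ (Submodule.span ℝ {a}).mkQ ''
            (R ∩ (Submodule.span ℝ (insert a S) : Set V))} S.ncard 0 ∧
      IsBaseSet
        {x : (Submodule.span ℝ ((Submodule.span ℝ {a}).mkQ ''
            (R ∩ (Submodule.span ℝ (insert a S) : Set V)))) |
          (x : V ⧸ Submodule.span ℝ {a}) ∈ (Submodule.span ℝ {a}).mkQ ''
            (R ∩ (Submodule.span ℝ (insert a S) : Set V))}
        {x : (Submodule.span ℝ ((Submodule.span ℝ {a}).mkQ ''
            (R ∩ (Submodule.span ℝ (insert a S) : Set V)))) |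
          (x : V ⧸ Submodule.span ℝ {a}) ∈ (Submodule.span ℝ {a}).mkQ '' S}
        S.ncard) ∧
    -- `ℤR^S = ℤS ⊕ ℤ k_S a`
    (∃ kS : ℕ, 0 < kS ∧
      (zspan (R ∩ (Submodule.span ℝ (insert a S) : Set V)) : Set V)
        = {v | ∃ μ ∈ AddSubgroup.closure S, ∃ m : ℤ, v = μ + (m * kS) • a} ∧
      (∀ μ ∈ AddSubgroup.closure S, ∀ m : ℤ,
        μ + ((m * kS : ℤ)) • a = 0 → μ = 0 ∧ m = 0)) := by
  refine ⟨part_one hE hred hfs hSP hSne hSproper hScon,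
    part_two hE hred hfs hSP hSne hSproper hScon _ ?_,
    part_three hE hred hfs hSP hSne hSproper⟩
  intro x y
  rfl
end

section
/- Let R be a reduced elliptic root system of rank l with fundamental-set Π ∪ {a}. Then for each α ∈ Π there exist a unique positive integer k(α) and a unique g(α) ∈ {∅, 2ℤ+1} such that R ∩ (ℝα ⊕ ℝa) = ⋃_{ε∈{1,−1}} ((εα + ℤk(α)a) ∪ (2εα + g(α)k(α)a)), where the set 2εα + g(α)k(α)a is empty if g(α) = ∅ and equals {2εα + mk(α)a : m an odd integer} if g(α) = 2ℤ+1. -/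
/-- The subset `⋃_{ε=±1} ((εα + ℤ kα a) ∪ (2εα + gα·kα a))` of the plane `ℝα ⊕ ℝa`;
here `gα : Bool`, with `false` encoding `g(α) = ∅` and `true` encoding `g(α) = 2ℤ+1`. -/
def kgLine {V : Type*} [AddCommGroup V] (a α : V) (kα : ℕ) (gα : Bool) : Set V :=
  {v | ∃ ε m : ℤ, (ε = 1 ∨ ε = -1) ∧ v = ε • α + (m * kα) • a} ∪
  {v | gα = true ∧ ∃ ε m : ℤ, (ε = 1 ∨ ε = -1) ∧ Odd m ∧ v = (2 * ε) • α + (m * kα) • a}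

/-- `k : Π → ℕ` and `g : Π → {∅, 2ℤ+1}` are the maps associated to the fundamental-set
`Π ∪ {a}`, i.e. `R ∩ (ℝα ⊕ ℝa) = ⋃_{ε=±1} ((εα + ℤ k(α) a) ∪ (2εα + g(α)k(α)a))`. -/
def IsKG {V : Type*} [AddCommGroup V] [Module ℝ V]
    (R : Set V) (a : V) (P : Set V) (k : V → ℕ) (g : V → Bool) : Prop :=
  ∀ α ∈ P, 0 < k α ∧
    R ∩ (Submodule.span ℝ {α, a} : Set V) = kgLine a α (k α) (g α)

/-- `c(α) = 1` if `g(α) = ∅`, `c(α) = 2` if `g(α) = 2ℤ+1`. -/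
def cMap {V : Type*} (g : V → Bool) (α : V) : ℕ := if g α then 2 else 1

/-- `α* := c(α)·α + k(α)·a`. -/
def starMap {V : Type*} [AddCommGroup V] (a : V) (k : V → ℕ) (g : V → Bool) (α : V) : V :=
  (cMap g α : ℤ) • α + (k α : ℤ) • a

/-- `B₊ := {α, α* | α ∈ Π}`. -/
def bplus {V : Type*} [AddCommGroup V] (a : V) (P : Set V) (k : V → ℕ) (g : V → Bool) :
    Set V :=
  P ∪ (starMap a k g '' P)

/-- `B := B₊ ∪ (−B₊)`. -/
def bfull {V : Type*} [AddCommGroup V] (a : V) (P : Set V) (k : V → ℕ) (g : V → Bool) :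
    Set V :=
  bplus a P k g ∪ (-(bplus a P k g))

/-- The set `R(Π,k,g) = ⋃_{w ∈ W_Π} ⋃_{α ∈ Π} ((w(α) + ℤk(α)a) ∪ (w(2α) + g(α)k(α)a))`. -/
def kgUnion {V : Type*} [AddCommGroup V] [Module ℝ V]
    (B : LinearMap.BilinForm ℝ V) (P : Set V) (a : V) (k : V → ℕ) (g : V → Bool) :
    Set V :=
  {v | ∃ w ∈ weyl B P, ∃ α ∈ P,
    (∃ m : ℤ, v = w α + (m * k α) • a) ∨
    (g α = true ∧ ∃ m : ℤ, Odd m ∧ v = w ((2 : ℤ) • α) + (m * k α) • a)}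

lemma aux_subgroup (S : ℤ → Prop) (h0 : S 0) (h : ∀ m n, S m → S n → S (n - 2 * m))
    (hne : ∃ t, t ≠ 0 ∧ S t) : ∃ k : ℕ, 0 < k ∧ ∀ m, S m ↔ ∃ j : ℤ, m = j * k := by
  let G := AddSubgroup.closure {m | S m}
  obtain ⟨g, hg⟩ := Int.subgroup_cyclic G
  have hshift : ∀ x ∈ G, ∀ n, S n → S (n + 2 * x) := by
    intro x hx
    induction hx using AddSubgroup.closure_induction with
    | mem x hx =>
      intro n hn
      have h1 : S (0 - 2 * x) := h _ _ hx h0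
      have h2 := h _ _ hx hn
      have h3 : S (n - 2 * x - 2 * x) := h _ _ hx h2
      have h4 : S (-n) := by
        have a1 := h _ _ hn hn
        convert a1 using 1
        ring
      have h5 := h _ _ hx h4
      have h6 := h _ _ h5 h5
      convert h6 using 1
      ring
    | zero => intro n hn; simpa using hn
    | add x y _ _ hx hy =>
      intro n hn
      have := hy _ (hx n hn)
      convert this using 1
      ring
    | neg x _ hx =>
      intro n hn
      have neg : ∀ n, S n → S (-n) := by
        intro n hn
        have a1 := h _ _ hn hn
        convert a1 using 1
        ring
      have := neg _ (hx _ (neg n hn))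
      convert this using 1
      ring
  have hmem : ∀ m, m ∈ G ↔ ∃ j : ℤ, m = j * g := by
    intro m
    rw [hg, AddSubgroup.mem_closure_singleton]
    simp [eq_comm]
  have hSG : ∀ m, S m → ∃ j : ℤ, m = j * g := fun m hm =>
    (hmem m).1 (AddSubgroup.subset_closure hm)
  have hgG : g ∈ G := (hmem g).2 ⟨1, by ring⟩
  have hg0 : g ≠ 0 := by
    rintro rfl
    obtain ⟨t, ht, hS⟩ := hne
    obtain ⟨j, hj⟩ := hSG t hS
    simp at hj
    exact ht hj
  have hodd : ∃ j : ℤ, Odd j ∧ S (j * g) := by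
    by_contra hcon
    push Not at hcon
    have : G ≤ AddSubgroup.zmultiples (2 * g) := by
      refine (AddSubgroup.closure_le _).2 ?_
      intro m hm
      obtain ⟨j, rfl⟩ := hSG m hm
      rcases Int.even_or_odd j with ⟨i, rfl⟩ | ho
      · refine AddSubgroup.mem_zmultiples_iff.2 ⟨i, ?_⟩
        simp
        ring
      · exact absurd hm (hcon j ho)
    obtain ⟨i, hi⟩ := AddSubgroup.mem_zmultiples_iff.1 (this hgG)
    have : g * (2 * i - 1) = 0 := by
      simp at hi
      linarith
    rcases mul_eq_zero.1 this with h | h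
    · exact hg0 h
    · omega
  have hall : ∀ j : ℤ, S (j * g) := by
    intro j
    rcases Int.even_or_odd j with ⟨i, rfl⟩ | ⟨i, rfl⟩
    · have := hshift (i * g) ((hmem _).2 ⟨i, rfl⟩) 0 h0
      convert this using 1
      ring
    · obtain ⟨_, ⟨p, rfl⟩, hp⟩ := hodd
      have := hshift ((i - p) * g) ((hmem _).2 ⟨_, rfl⟩) _ hp
      convert this using 1
      ring
  refine ⟨g.natAbs, Int.natAbs_pos.2 hg0, fun m => ⟨fun hm => ?_, ?_⟩⟩
  · obtain ⟨j, rfl⟩ := hSG m hm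
    rcases Int.natAbs_eq g with h | h
    · exact ⟨j, by rw [← h]⟩
    · exact ⟨-j, by rw [neg_mul_comm, ← h]⟩
  · rintro ⟨j, rfl⟩
    rcases Int.natAbs_eq g with h | h
    · rw [← h]; exact hall j
    · have := hall (-j)
      rwa [neg_mul_comm, h, neg_neg] at this

lemma aux_plane (Q : ℝ → ℝ → Prop) (h1 : Q 1 0)
    (hr : ∀ x y x' y', Q x y → Q x' y' → Q (-x') (y' - 2 * x' / x * y))
    (hx : ∀ x y, Q x y → x = 1 ∨ x = -1 ∨ x = 2 ∨ x = -2)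
    (hy : ∀ x y, Q x y → ∃ m : ℤ, y = m)
    (red : ∀ x y, Q x y → ¬ Q (2 * x) (2 * y))
    (hne : ∃ t, t ≠ 0 ∧ Q 1 t) :
    ∃ (k : ℕ) (g : Bool), 0 < k ∧ ∀ x y, Q x y ↔
      ((∃ ε m : ℤ, (ε = 1 ∨ ε = -1) ∧ x = ε ∧ y = ((m * k : ℤ) : ℝ)) ∨
       (g = true ∧ ∃ ε m : ℤ, (ε = 1 ∨ ε = -1) ∧ Odd m ∧ x = ((2 * ε : ℤ) : ℝ)
        ∧ y = ((m * k : ℤ) : ℝ))) := by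
  have flip : ∀ x y, Q x y → Q (-x) y := by
    intro x y h
    have := hr _ _ _ _ h1 h
    simpa using this
  have neg : ∀ x y, x ≠ 0 → Q x y → Q (-x) (-y) := by
    intro x y h0 h
    have := hr _ _ _ _ h h
    convert this using 1
    field_simp
    ring
  obtain ⟨k, hk, hS⟩ := aux_subgroup (fun m => Q 1 (m : ℝ)) (by simpa using h1) (by
    intro m n hm hn
    have := flip _ _ (hr _ _ _ _ hm hn)
    convert this using 1
    · norm_num
    · push_cast; ring) (by
    obtain ⟨t, ht, hQ⟩ := hne
    obtain ⟨m, rfl⟩ := hy _ _ hQ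
    exact ⟨m, by exact_mod_cast ht, hQ⟩)
  have hS' : ∀ j : ℤ, Q 1 ((j * k : ℤ) : ℝ) := fun j => (hS _).2 ⟨j, rfl⟩
  have two : ∀ y, Q 2 y → ∃ j : ℤ, Odd j ∧ y = ((j * k : ℤ) : ℝ) := by
    intro y h
    obtain ⟨m, rfl⟩ := hy _ _ h
    have a1 := hr _ _ _ _ h h1
    have a2 := neg _ _ (by norm_num) a1
    have a3 : Q 1 (m : ℝ) := by
      convert a2 using 1
      · norm_num
      · ring
    obtain ⟨j, hj⟩ := (hS m).1 a3
    refine ⟨j, ?_, by exact_mod_cast hj⟩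
    by_contra ho
    rw [Int.not_odd_iff_even] at ho
    obtain ⟨i, rfl⟩ := ho
    refine red _ _ (hS' i) ?_
    convert h using 1
    · norm_num
    · rw [hj]; push_cast; ring
  have twoall : (∃ y, Q 2 y) → ∀ j : ℤ, Odd j → Q 2 ((j * k : ℤ) : ℝ) := by
    rintro ⟨y, h⟩
    obtain ⟨j, hj, rfl⟩ := two y h
    have sh : ∀ (p : ℤ) (j : ℤ), Q 2 ((j * k : ℤ) : ℝ) → Q 2 (((j + 4 * p) * k : ℤ) : ℝ) := by
      intro p j h
      have := hr _ _ _ _ (hS' p) (flip _ _ h)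
      convert this using 1
      · norm_num
      · push_cast; ring
    have ng : Q 2 (((-j) * k : ℤ) : ℝ) := by
      have := flip _ _ (neg _ _ (by norm_num) h)
      convert this using 1
      · norm_num
      · push_cast; ring
    intro i hi
    have : (∃ p, i = j + 4 * p) ∨ (∃ p, i = -j + 4 * p) := by
      obtain ⟨u, rfl⟩ := hi
      obtain ⟨w, rfl⟩ := hj
      rcases Int.even_or_odd' (u - w) with ⟨q, hq | hq⟩
      · exact Or.inl ⟨q, by omega⟩
      · exact Or.inr ⟨w + q + 1, by omega⟩
    rcases this with ⟨p, rfl⟩ | ⟨p, rfl⟩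
    · exact sh _ _ h
    · exact sh _ _ ng
  classical
  refine ⟨k, decide (∃ y, Q 2 y), hk, fun x y => ⟨fun h => ?_, ?_⟩⟩
  · rcases hx _ _ h with rfl | rfl | rfl | rfl
    · left
      obtain ⟨m, rfl⟩ := hy _ _ h
      obtain ⟨j, hj⟩ := (hS m).1 h
      exact ⟨1, j, Or.inl rfl, by norm_num, by exact_mod_cast hj⟩
    · left
      obtain ⟨m, rfl⟩ := hy _ _ h
      have h' := flip _ _ h
      rw [neg_neg] at h'
      obtain ⟨j, hj⟩ := (hS m).1 h'
      exact ⟨-1, j, Or.inr rfl, by norm_num, by exact_mod_cast hj⟩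
    · right
      refine ⟨by simpa using ⟨y, h⟩, ?_⟩
      obtain ⟨j, hj, rfl⟩ := two y h
      exact ⟨1, j, Or.inl rfl, hj, by norm_num, rfl⟩
    · right
      have h' := flip _ _ h
      rw [neg_neg] at h'
      refine ⟨by simpa using ⟨y, h'⟩, ?_⟩
      obtain ⟨j, hj, rfl⟩ := two y h'
      exact ⟨-1, j, Or.inr rfl, hj, by norm_num, rfl⟩
  · rintro (⟨ε, m, hε, rfl, rfl⟩ | ⟨hg, ε, m, hε, hm, rfl, rfl⟩)
    · rcases hε with rfl | rfl
      · simpa using hS' m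
      · simpa using flip _ _ (hS' m)
    · have := twoall (by simpa using hg) m hm
      rcases hε with rfl | rfl
      · simpa using this
      · simpa using flip _ _ this

lemma aux_lattice {V : Type*} [AddCommGroup V] [Module ℝ V]
    {B : LinearMap.BilinForm ℝ V} {R : Set V} {l : ℕ}
    (hE : IsEARS B R l 2) {a b : V} (ha : a ∈ zspan R) (hb : b ∈ zspan R)
    (hab : ∀ m n : ℤ, m • a + n • b = 0 → m = 0 ∧ n = 0)
    (d : ℝ) (m n : ℤ) (h : d • a = m • a + n • b) : d = m := by
  have := hE.findim
  have := hE.free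
  have : Module.Finite ℤ (zspan R) :=
    Module.finite_of_finrank_pos (by rw [hE.rank_eq]; omega)
  let bs : Module.Basis (Fin (l + 2)) ℤ (zspan R) := Module.finBasisOfFinrankEq _ _ hE.rank_eq
  let e : Fin (l + 2) → V := fun i => (bs i : V)
  have hexp : ∀ v (hv : v ∈ zspan R), v = ∑ i, ((bs.repr ⟨v, hv⟩ i : ℤ) : ℝ) • e i := by
    intro v hv
    have h1 := congrArg (zspan R).subtype (bs.sum_repr ⟨v, hv⟩)
    rw [map_sum] at h1
    simp only [map_zsmul, AddSubgroup.subtype_apply] at h1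
    refine h1.symm.trans ?_
    refine Finset.sum_congr rfl fun i _ => ?_
    rw [Int.cast_smul_eq_zsmul]
  have hli : LinearIndependent ℝ e := by
    apply linearIndependent_of_top_le_span_of_card_eq_finrank
    · rw [← hE.span_eq_top, Submodule.span_le]
      intro v hv
      rw [hexp v (AddSubgroup.subset_closure hv)]
      exact Submodule.sum_mem _ fun i _ =>
        Submodule.smul_mem _ _ (Submodule.subset_span ⟨i, rfl⟩)
    · rw [hE.dim_eq, Fintype.card_fin]
  have ha0 : a ≠ 0 := by
    rintro rfl
    have := hab 1 0 (by simp)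
    omega
  have hdm : (d - m) • a = (n : ℝ) • b := by
    rw [sub_smul, h, Int.cast_smul_eq_zsmul, Int.cast_smul_eq_zsmul]
    abel
  have hcoord : ∀ i, (d - m) * (bs.repr ⟨a, ha⟩ i : ℤ) = n * (bs.repr ⟨b, hb⟩ i : ℤ) := by
    have h2 : ∑ i, ((d - m) * (bs.repr ⟨a, ha⟩ i : ℤ) - n * (bs.repr ⟨b, hb⟩ i : ℤ)) • e i = 0 := by
      simp only [sub_smul, mul_smul, Finset.sum_sub_distrib, ← Finset.smul_sum]
      simp only [← sub_smul]
      rw [← hexp a ha, ← hexp b hb, hdm, sub_self]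
    intro i
    exact sub_eq_zero.1 (Fintype.linearIndependent_iff.1 hli _ h2 i)
  have hex : ∃ i, bs.repr ⟨a, ha⟩ i ≠ 0 := by
    by_contra hcon
    push Not at hcon
    apply ha0
    rw [hexp a ha]
    simp [hcon]
  obtain ⟨i, hi⟩ := hex
  set p := bs.repr ⟨a, ha⟩ i
  set q := bs.repr ⟨b, hb⟩ i
  have key : ((n * q : ℤ) : ℝ) • a = ((p * n : ℤ) : ℝ) • b := by
    have := hcoord i
    push_cast
    rw [← this, mul_comm, mul_smul, hdm, smul_smul]
  have h3 := hab (n * q) (-(p * n)) (by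
    rw [neg_smul, ← Int.cast_smul_eq_zsmul ℝ (n * q), ← Int.cast_smul_eq_zsmul ℝ (p * n), key]
    abel)
  have hn : n = 0 := by
    rcases mul_eq_zero.1 (neg_eq_zero.1 h3.2) with h | h
    · exact absurd h hi
    · exact h
  rw [hn, Int.cast_zero, zero_smul] at hdm
  rcases smul_eq_zero.1 hdm with h | h
  · linarith
  · exact absurd h ha0

lemma aux_nnspan {V M : Type*} [AddCommGroup V] [Module ℝ V] [AddCommGroup M] [Module ℝ M]
    (f : V →ₗ[ℝ] M) (P : Set V) [Fintype P] (x : M) (hx : x ∈ nnspan (f '' P)) :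
    ∃ n : P → ℕ, x = f (∑ i, (n i : ℝ) • (i : V)) := by
  classical
  refine AddSubmonoid.closure_induction (motive := fun x _ => ∃ n : P → ℕ, x = f (∑ i, (n i : ℝ) • (i : V))) ?_ ?_ ?_ hx
  · rintro _ ⟨v, hv, rfl⟩
    refine ⟨Pi.single ⟨v, hv⟩ 1, ?_⟩
    congr 1
    rw [Finset.sum_eq_single ⟨v, hv⟩]
    · simp
    · intro j _ hj
      simp [hj]
    · simp
  · exact ⟨0, by simp⟩
  · rintro x y _ _ ⟨n, rfl⟩ ⟨m, rfl⟩
    exact ⟨n + m, by simp [add_smul, Finset.sum_add_distrib]⟩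

theorem stmt8 {V : Type*} [AddCommGroup V] [Module ℝ V]
    (B : LinearMap.BilinForm ℝ V) (R : Set V) (l : ℕ)
    (hE : IsEARS B R l 2) (hred : IsReducedRS R)
    (P : Set V) (a : V) (hfs : IsFundamentalSet B R l P a) :
    ∀ α ∈ P, ∃! p : ℕ × Bool, 0 < p.1 ∧
      R ∩ (Submodule.span ℝ {α, a} : Set V) = kgLine a α p.1 p.2 := by
  classical
  obtain ⟨haZ, haa, ⟨b, hbZ, hbb, hnull, hab⟩, hPR, hPfin, hPcard, -, -, hPcard', hli, hbase⟩ := hfs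
  have hfd := hE.findim
  have : Fintype P := hPfin.fintype
  have ha0 : a ≠ 0 := by
    rintro rfl
    have := hab 1 0 (by simp)
    omega
  have hBa : B a = 0 := by
    have : a ∈ nullSet B := haa
    rw [hE.null_eq] at this
    exact this
  have hBa' : ∀ v, B v a = 0 := fun v => by rw [hE.symm, hBa]; rfl
  have hinj : Set.InjOn (Submodule.span ℝ {a}).mkQ P :=
    (Set.ncard_image_iff hPfin).1 (by rw [hPcard', hPcard])
  -- independence
  have hind : ∀ (x : P → ℝ) (t : ℝ), ∑ i, x i • (i : V) = t • a → ∀ i, x i = 0 := by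
    intro x t h
    have h1 : LinearIndependent ℝ (fun i : P => (Submodule.span ℝ {a}).mkQ (i : V)) := by
      have := hli.comp (Set.imageFactorization (Submodule.span ℝ {a}).mkQ P)
        (by
          intro i j hij
          exact Subtype.ext (hinj i.2 j.2 (congrArg Subtype.val hij)))
      exact this
    refine Fintype.linearIndependent_iff.1 h1 x ?_
    have h2 := congrArg (Submodule.span ℝ {a}).mkQ h
    rw [map_sum] at h2
    simp only [map_smul] at h2
    rw [h2]
    have : (Submodule.span ℝ {a}).mkQ a = 0 := by
      rw [Submodule.mkQ_apply, Submodule.Quotient.mk_eq_zero]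
      exact Submodule.mem_span_singleton_self a
    rw [this, smul_zero]
  have hlift : ∀ u v : V, (Submodule.span ℝ {a}).mkQ u = (Submodule.span ℝ {a}).mkQ v →
      ∃ t : ℝ, u = v + t • a := by
    intro u v h
    rw [Submodule.mkQ_apply, Submodule.mkQ_apply, Submodule.Quotient.eq] at h
    obtain ⟨t, ht⟩ := Submodule.mem_span_singleton.1 h
    exact ⟨t, by rw [ht]; abel⟩
  have hrep : ∀ β ∈ R, ∃ (n : P → ℕ) (t : ℝ), β = ∑ i, (n i : ℝ) • (i : V) + t • a ∨
      β = -(∑ i, (n i : ℝ) • (i : V)) + t • a := by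
    intro β hβ
    have h1 : (Submodule.span ℝ {a}).mkQ β ∈ (Submodule.span ℝ {a}).mkQ '' R := ⟨β, hβ, rfl⟩
    rw [hbase] at h1
    rcases h1 with ⟨-, h1⟩ | ⟨-, h1⟩
    · obtain ⟨n, hn⟩ := aux_nnspan _ _ _ h1
      obtain ⟨t, ht⟩ := hlift _ _ hn
      exact ⟨n, t, Or.inl ht⟩
    · obtain ⟨n, hn⟩ := aux_nnspan _ _ _ (Set.mem_neg.1 h1)
      rw [neg_eq_iff_eq_neg, ← map_neg] at hn
      obtain ⟨t, ht⟩ := hlift _ _ hn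
      exact ⟨n, t, Or.inr ht⟩
  have hs : ∀ u ∈ R, ∀ v ∈ R, v - (2 * (B u u)⁻¹ * B u v) • u ∈ R := by
    intro u hu v hv
    rw [← hE.reflect u hu]
    refine ⟨v, hv, ?_⟩
    simp [srefl]
  have hpos : ∀ u ∈ R, 0 < B u u := fun u hu =>
    lt_of_le_of_ne (hE.posSemidef u) (Ne.symm (hE.root_nonisotropic u hu))
  have hneg : ∀ u ∈ R, -u ∈ R := by
    intro u hu
    have := hs u hu u hu
    convert this using 1
    rw [mul_assoc, inv_mul_cancel₀ (hpos u hu).ne', mul_one, two_smul]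
    abel
  -- coefficient in the plane
  have hcoef : ∀ α ∈ P, ∀ x y : ℝ, x • α + y • a ∈ R →
      x = 1 ∨ x = -1 ∨ x = 2 ∨ x = -2 := by
    intro α hα x y hv
    have hαpos := hpos α (hPR hα)
    have hxint : ∃ c : ℤ, x = c := by
      have hsing : ∑ i : P, (Pi.single (⟨α, hα⟩ : P) x : P → ℝ) i • (i : V) = x • α := by
        rw [Finset.sum_eq_single ⟨α, hα⟩]
        · simp
        · intro j _ hj
          simp [hj]
        · simp
      obtain ⟨n, t, h | h⟩ := hrep _ hv
      · have := hind (fun i => (Pi.single (⟨α, hα⟩ : P) x : P → ℝ) i - n i) (t - y) (by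
          simp only [sub_smul, Finset.sum_sub_distrib]
          rw [hsing, sub_eq_sub_iff_add_eq_add, h]
          abel) ⟨α, hα⟩
        refine ⟨n ⟨α, hα⟩, ?_⟩
        simp at this
        push_cast
        linarith
      · have := hind (fun i => (Pi.single (⟨α, hα⟩ : P) x : P → ℝ) i + n i) (t - y) (by
          simp only [add_smul, sub_smul, Finset.sum_add_distrib]
          rw [hsing, eq_sub_iff_add_eq, add_right_comm, h]
          abel) ⟨α, hα⟩
        refine ⟨-n ⟨α, hα⟩, ?_⟩
        simp at this
        push_cast
        linarith
    obtain ⟨c, rfl⟩ := hxint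
    obtain ⟨m, hm⟩ := hE.integral _ hv _ (hPR hα)
    have hne := hE.root_nonisotropic _ hv
    simp [hBa, hBa'] at hm hne
    have hc : (c : ℝ) ≠ 0 := by
      intro h
      exact hne.1 (by exact_mod_cast h)
    have : ((m * c : ℤ) : ℝ) = ((2 : ℤ) : ℝ) := by
      push_cast
      apply mul_left_cancel₀ (mul_ne_zero hc hαpos.ne')
      linarith
    have h2 : m * c = 2 := by exact_mod_cast this
    have hdvd : c ∣ 2 := ⟨m, by linarith⟩
    have hle := Int.le_of_dvd (by norm_num) hdvd
    have hge := Int.le_of_dvd (by norm_num) ((neg_dvd).2 hdvd)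
    have hc0 : c ≠ 0 := by exact_mod_cast hc
    have : c = 1 ∨ c = -1 ∨ c = 2 ∨ c = -2 := by omega
    rcases this with rfl | rfl | rfl | rfl <;> norm_num
  -- existence of translations
  have hex : ∃ β ∈ R, ∃ t : ℝ, t ≠ 0 ∧ β + t • a ∈ R := by
    by_contra hcon
    push Not at hcon
    have main : ∀ N : ℕ, ∀ β ∈ R, ∀ (n : P → ℕ) (t : ℝ), ∑ i, n i = N →
        β = ∑ i, (n i : ℝ) • (i : V) + t • a → β ∈ Submodule.span ℝ P := by
      intro N
      induction N using Nat.strong_induction_on with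
      | _ N IH =>
      intro β hβ n t hN hβe
      have hBB : B β β = ∑ i, (n i : ℝ) * B β i := by
        have h1 := congrArg (B β) hβe
        rw [h1, map_add, map_sum, map_smul, hBa', smul_zero, add_zero]
        simp only [map_smul, smul_eq_mul]
      have hi : ∃ i : P, 0 < (n i : ℝ) * B β i := by
        by_contra hc
        push Not at hc
        have := Finset.sum_nonpos fun i (_ : i ∈ Finset.univ) => hc i
        have := hpos β hβ
        linarith
      obtain ⟨i, hi⟩ := hi
      have hBi : 0 < B β i := pos_of_mul_pos_right hi (Nat.cast_nonneg _)
      have hiR := hPR i.2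
      obtain ⟨c, hc⟩ := hE.integral _ hiR _ hβ
      have hipos := hpos _ hiR
      have hcpos : (0 : ℝ) < c := by
        rw [hE.symm] at hc
        by_contra hh
        push Not at hh
        have := mul_nonpos_of_nonpos_of_nonneg hh hipos.le
        linarith
      have hγ := hs _ hiR _ hβ
      have hcc : 2 * (B (i : V) i)⁻¹ * B i β = c := by
        rw [mul_right_comm, hc]
        field_simp
      rw [hcc] at hγ
      have hγe : β - (c : ℝ) • (i : V) =
          ∑ j, ((n j : ℝ) - (Pi.single i (c : ℝ) : P → ℝ) j) • (j : V) + t • a := by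
        simp only [sub_smul, Finset.sum_sub_distrib]
        have hsing : ∑ j : P, (Pi.single i (c : ℝ) : P → ℝ) j • (j : V) = (c : ℝ) • (i : V) := by
          rw [Finset.sum_eq_single i]
          · simp
          · intro j _ hj
            simp [hj]
          · simp
        rw [hsing]
        nth_rewrite 1 [hβe]
        abel
      obtain ⟨n', t', h | h⟩ := hrep _ hγ
      · have heq := hind (fun j => (n j : ℝ) - (Pi.single i (c : ℝ) : P → ℝ) j - n' j) (t' - t) (by
          simp only [sub_smul _ (n' _ : ℝ), Finset.sum_sub_distrib]
          rw [h] at hγe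
          rw [sub_smul, sub_eq_sub_iff_add_eq_add, ← hγe]
          abel)
        have hsum : ((∑ j, n' j : ℕ) : ℝ) < ((∑ j, n j : ℕ) : ℝ) := by
          push_cast
          refine Finset.sum_lt_sum (fun j _ => ?_) ⟨i, Finset.mem_univ _, ?_⟩
          · have := heq j
            have h0 : (0 : ℝ) ≤ (Pi.single i (c : ℝ) : P → ℝ) j := by
              by_cases hj : j = i
              · subst hj; simpa using hcpos.le
              · simp [hj]
            linarith
          · have := heq i
            simp only [Pi.single_eq_same] at this
            linarith
        have hlt : ∑ j, n' j < N := by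
          rw [← hN]
          exact_mod_cast hsum
        have := IH _ hlt _ hγ n' t' rfl h
        have h2 := Submodule.add_mem _ this
          (Submodule.smul_mem _ (c : ℝ) (Submodule.subset_span i.2))
        simpa using h2
      · have heq := hind (fun j => (n j : ℝ) - (Pi.single i (c : ℝ) : P → ℝ) j + n' j) (t' - t) (by
          simp only [add_smul _ (n' _ : ℝ), Finset.sum_add_distrib]
          rw [h] at hγe
          rw [sub_smul, eq_sub_iff_add_eq, add_right_comm, ← hγe]
          abel)
        have hβ2 : β = (n i : ℝ) • (i : V) + t • a := by
          rw [hβe]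
          congr 1
          rw [Finset.sum_eq_single i]
          · intro j _ hj
            have := heq j
            simp only [Pi.single_eq_of_ne hj] at this
            have h1 : (0 : ℝ) ≤ n j := Nat.cast_nonneg _
            have h2 : (0 : ℝ) ≤ n' j := Nat.cast_nonneg _
            have h3 : (n j : ℝ) = 0 := by linarith
            rw [h3, zero_smul]
          · simp
        have h0 : (0 : ℝ) ≤ n i := Nat.cast_nonneg _
        have ht : t = 0 := by
          by_contra ht
          rcases hcoef i i.2 _ _ (hβ2 ▸ hβ) with h | h | h | h
          · refine hcon i hiR t ht ?_
            rw [h, one_smul] at hβ2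
            rw [← hβ2]
            exact hβ
          · linarith
          · have := hneg _ (hs β hβ i hiR)
            refine hcon i hiR t ht ?_
            convert this using 1
            have e1 : B β β = 4 * B (i : V) i := by
              rw [hβ2, h]; simp [hBa, hBa']; ring
            have e2 : B β i = 2 * B (i : V) i := by
              rw [hβ2, h]; simp [hBa]
            have e3 : 2 * (B β β)⁻¹ * B β i = 1 := by
              rw [e1, e2]; field_simp; norm_num
            rw [e3, one_smul, hβ2, h, two_smul]
            abel
          · linarith
        rw [hβ2, ht, zero_smul, add_zero]
        exact Submodule.smul_mem _ _ (Submodule.subset_span i.2)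
    have hRP : Submodule.span ℝ R ≤ Submodule.span ℝ P := by
      rw [Submodule.span_le]
      intro β hβ
      obtain ⟨n, t, h | h⟩ := hrep β hβ
      · exact main _ β hβ n t rfl h
      · have := main _ (-β) (hneg β hβ) n (-t) rfl (by rw [h, neg_smul]; abel)
        simpa using this
    rw [hE.span_eq_top, top_le_iff] at hRP
    have h1 := finrank_span_le_card (R := ℝ) P
    rw [hRP, finrank_top, hE.dim_eq, ← Set.ncard_eq_toFinset_card', hPcard] at h1
    omega
  have hall : ∀ β ∈ R, ∃ t : ℝ, t ≠ 0 ∧ β + t • a ∈ R := by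
    let S' : Set V := {β | β ∈ R ∧ ∃ t : ℝ, t ≠ 0 ∧ β + t • a ∈ R}
    have : S' = R := by
      by_contra hne
      obtain ⟨β, hβ, h⟩ := hex
      obtain ⟨x, ⟨hxR, t, ht, hxt⟩, y, ⟨hyR, hyS⟩, hxy⟩ :=
        hE.connected S' (fun _ h => h.1) ⟨β, hβ, h⟩ hne
      apply hyS
      have hxp := hpos x hxR
      refine ⟨hyR, (2 * (B x x)⁻¹ * B x y) * t, ?_, ?_⟩
      · exact mul_ne_zero (mul_ne_zero (mul_ne_zero two_ne_zero (inv_ne_zero hxp.ne')) hxy) ht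
      · have h1 := hs _ hxt _ (hs x hxR y hyR)
        convert h1 using 1
        have e : 2 * (B (x + t • a) (x + t • a))⁻¹ *
            B (x + t • a) (y - (2 * (B x x)⁻¹ * B x y) • x) = -(2 * (B x x)⁻¹ * B x y) := by
          simp [hBa, hBa']
          field_simp
          ring
        rw [e]
        module
    intro β hβ
    rw [← this] at hβ
    exact hβ.2
  intro α hα
  have hαR := hPR hα
  have hαp := hpos α hαR
  have hzero : ∀ x y x' y' : ℝ, x • α + y • a = x' • α + y' • a → x = x' ∧ y = y' := by
    intro x y x' y' h
    have h1 := congrArg (B α) h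
    simp [hBa'] at h1
    have hx : x = x' := h1.resolve_right hαp.ne'
    subst hx
    have h2 := add_left_cancel h
    exact ⟨rfl, smul_left_injective ℝ ha0 h2⟩
  obtain ⟨k, g, hk, hkg⟩ := aux_plane (fun x y => x • α + y • a ∈ R) (by simpa using hαR) (by
      intro x y x' y' h h'
      have hx : x ≠ 0 := by
        rcases hcoef α hα _ _ h with h | h | h | h <;> rw [h] <;> norm_num
      have := hs _ h _ h'
      convert this using 1
      have e : 2 * (B (x • α + y • a) (x • α + y • a))⁻¹ * B (x • α + y • a) (x' • α + y' • a)
          = 2 * x' / x := by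
        simp [hBa, hBa']
        field_simp
      rw [e, smul_add, smul_smul, smul_smul, div_mul_cancel₀ _ hx]
      module) (hcoef α hα) (by
      intro x y h
      have hc : ∃ c : ℤ, x = c := by
        rcases hcoef α hα _ _ h with h | h | h | h
        · exact ⟨1, by simp [h]⟩
        · exact ⟨-1, by simp [h]⟩
        · exact ⟨2, by simp [h]⟩
        · exact ⟨-2, by simp [h]⟩
      obtain ⟨c, rfl⟩ := hc
      have hm : y • a ∈ (zspan R : Set V) ∩ nullSet B := by
        constructor
        · have h1 : (c : ℝ) • α + y • a - c • α ∈ zspan R :=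
            sub_mem (AddSubgroup.subset_closure h)
              (zsmul_mem (AddSubgroup.subset_closure hαR) c)
          rw [Int.cast_smul_eq_zsmul, add_sub_cancel_left] at h1
          exact h1
        · simp [nullSet, hBa]
      rw [hnull] at hm
      obtain ⟨m, n, hmn⟩ := hm
      exact ⟨m, aux_lattice hE haZ hbZ hab y m n hmn⟩) (by
      intro x y h h2
      apply hred _ h
      convert h2 using 1
      module) (by
      obtain ⟨t, ht, h⟩ := hall α hαR
      exact ⟨t, ht, by simpa using h⟩)
  have hline : ∀ (k : ℕ) (g : Bool) (x y : ℝ), x • α + y • a ∈ kgLine a α k g ↔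
      ((∃ ε m : ℤ, (ε = 1 ∨ ε = -1) ∧ x = ε ∧ y = ((m * k : ℤ) : ℝ)) ∨
       (g = true ∧ ∃ ε m : ℤ, (ε = 1 ∨ ε = -1) ∧ Odd m ∧ x = ((2 * ε : ℤ) : ℝ)
        ∧ y = ((m * k : ℤ) : ℝ))) := by
    intro k g x y
    have key : ∀ p q : ℤ, x • α + y • a = p • α + q • a ↔ x = p ∧ y = q := by
      intro p q
      rw [← Int.cast_smul_eq_zsmul ℝ p, ← Int.cast_smul_eq_zsmul ℝ q]
      exact ⟨hzero _ _ _ _, by rintro ⟨rfl, rfl⟩; rfl⟩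
    simp only [kgLine, Set.mem_union, Set.mem_ofPred_eq, key]
  have hsub : ∀ (k : ℕ) (g : Bool), kgLine a α k g ⊆ (Submodule.span ℝ {α, a} : Set V) := by
    intro k g v hv
    have : ∃ p q : ℤ, v = p • α + q • a := by
      rcases hv with ⟨ε, m, -, h⟩ | ⟨-, ε, m, -, -, h⟩
      · exact ⟨_, _, h⟩
      · exact ⟨_, _, h⟩
    obtain ⟨p, q, rfl⟩ := this
    exact add_mem (zsmul_mem (Submodule.subset_span (by simp)) _)
      (zsmul_mem (Submodule.subset_span (by simp)) _)
  have hset : R ∩ (Submodule.span ℝ {α, a} : Set V) = kgLine a α k g := by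
    ext v
    constructor
    · rintro ⟨hv, hs⟩
      obtain ⟨x, y, rfl⟩ := Submodule.mem_span_pair.1 hs
      exact (hline k g x y).2 ((hkg x y).1 hv)
    · intro hv
      have hs := hsub k g hv
      refine ⟨?_, hs⟩
      obtain ⟨x, y, rfl⟩ := Submodule.mem_span_pair.1 hs
      exact (hkg x y).2 ((hline k g x y).1 hv)
  have hdvd : ∀ (k k' : ℕ) (g g' : Bool), kgLine a α k g = kgLine a α k' g' → k' ∣ k := by
    intro k k' g g' h
    have h1 : (1 : ℝ) • α + (k : ℝ) • a ∈ kgLine a α k g :=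
      (hline _ _ _ _).2 (Or.inl ⟨1, 1, Or.inl rfl, by norm_num, by simp⟩)
    rw [h, hline] at h1
    rcases h1 with ⟨ε, m, -, -, h2⟩ | ⟨-, ε, m, -, -, h2, -⟩
    · have h3 : (k : ℤ) = m * k' := by exact_mod_cast h2
      exact Int.natCast_dvd_natCast.1 ⟨m, by linarith⟩
    · have h3 : (1 : ℤ) = 2 * ε := by exact_mod_cast h2
      omega
  have hgg : ∀ (k : ℕ) (g g' : Bool), kgLine a α k g = kgLine a α k g' → g = true → g' = true := by
    intro k g g' h hg
    have h1 : (2 : ℝ) • α + (k : ℝ) • a ∈ kgLine a α k g :=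
      (hline _ _ _ _).2 (Or.inr ⟨hg, 1, 1, Or.inl rfl, odd_one, by norm_num, by simp⟩)
    rw [h, hline] at h1
    rcases h1 with ⟨ε, m, hε, h2, -⟩ | ⟨hg', -⟩
    · have h3 : (2 : ℤ) = ε := by exact_mod_cast h2
      omega
    · exact hg'
  refine ⟨(k, g), ⟨hk, hset⟩, ?_⟩
  rintro ⟨k', g'⟩ ⟨hk', hset'⟩
  have heq : kgLine a α k' g' = kgLine a α k g := hset'.symm.trans hset
  have hkk : k' = k := Nat.dvd_antisymm (hdvd _ _ _ _ heq.symm) (hdvd _ _ _ _ heq)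
  subst hkk
  have : g' = g := Bool.eq_iff_iff.2 ⟨hgg _ _ _ heq, hgg _ _ _ heq.symm⟩
  rw [this]
end
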